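/- arXiv:0806.0681 — 2 statements merged into one kernel-verified Lean document; each statement's English description precedes it below -/
import Mathlib

section
/- Every automorphism φ of K[x,y] over a field K can be written uniquely as a composition α₁∘β₁∘α₂∘β₂∘⋯∘α_k∘β_k∘λ, where each α_i is either the identity or of the form (y, x + a y) with a ∈ K (and α₂,…,α_k not the identity), each β_i = (x + h_i(y), y) with 0 ≠ h_i(y) ∈ y²K[y], and λ is an affine automorphism; moreover deg(φ) = deg(h_1)⋯deg(h_k). -/
open MvPolynomial

/-- The endomorphism of `K[x,y]` corresponding to the pair `α = (y, x + a y)`. -/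
noncomputable def alphaHom {K : Type*} [CommRing K] (a : K) :
    MvPolynomial (Fin 2) K →ₐ[K] MvPolynomial (Fin 2) K :=
  aeval ![X 1, X 0 + C a * X 1]

/-- `α₁` may be the identity (`none`) or `(y, x + a y)` (`some a`). -/
noncomputable def alphaOpt {K : Type*} [CommRing K] (o : Option K) :
    MvPolynomial (Fin 2) K →ₐ[K] MvPolynomial (Fin 2) K :=
  o.elim (AlgHom.id K _) alphaHom

/-- The endomorphism of `K[x,y]` corresponding to the pair `β = (x + h(y), y)`. -/
noncomputable def betaHom {K : Type*} [CommRing K] (h : Polynomial K) :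
    MvPolynomial (Fin 2) K →ₐ[K] MvPolynomial (Fin 2) K :=
  aeval ![X 0 + Polynomial.aeval (X 1 : MvPolynomial (Fin 2) K) h, X 1]

/-- Nonzero polynomials `h ∈ y²K[y]`, i.e. with vanishing constant and linear term. -/
def H (K : Type*) [CommRing K] : Type _ :=
  {h : Polynomial K // h ≠ 0 ∧ h.coeff 0 = 0 ∧ h.coeff 1 = 0}

/-- Data `((a₁,b₁,c₁),(a₂,b₂,c₂))` with `a₁b₂ ≠ a₂b₁` of an affine automorphism
`(a₁x + b₁y + c₁, a₂x + b₂y + c₂)`. -/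
def Aff (K : Type*) [CommRing K] : Type _ :=
  {t : (K × K × K) × (K × K × K) // t.1.1 * t.2.2.1 ≠ t.2.1 * t.1.2.1}

/-- The affine endomorphism of `K[x,y]` attached to data in `Aff K`. -/
noncomputable def lamOf {K : Type*} [CommRing K] (t : Aff K) :
    MvPolynomial (Fin 2) K →ₐ[K] MvPolynomial (Fin 2) K :=
  aeval ![C t.1.1.1 * X 0 + C t.1.1.2.1 * X 1 + C t.1.1.2.2,
          C t.1.2.1 * X 0 + C t.1.2.2.1 * X 1 + C t.1.2.2.2]

/-- Decomposition data for `φ = α₁∘β₁∘α₂∘β₂∘⋯∘α_k∘β_k∘λ`: either `k = 0` (`none`) and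
`φ = λ`, or `some (α₁, β₁, [(α₂,β₂),…,(α_k,β_k)])` together with `λ`; here `α₁` is the
identity or `(y, x+ay)`, the remaining `α_i = (y, x+a_iy)`, and `β_i = (x + h_i(y), y)`
with `0 ≠ h_i ∈ y²K[y]`. -/
def DecompData (K : Type*) [CommRing K] : Type _ :=
  Option (Option K × H K × List (K × H K)) × Aff K

/-- The endomorphism `α₁∘β₁∘α₂∘β₂∘⋯∘α_k∘β_k∘λ` attached to decomposition data. -/
noncomputable def wordHom {K : Type*} [CommRing K] (d : DecompData K) :
    MvPolynomial (Fin 2) K →ₐ[K] MvPolynomial (Fin 2) K :=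
  match d.1 with
  | none => lamOf d.2
  | some (oa, h, rest) =>
      (alphaOpt oa).comp ((betaHom h.1).comp
        (rest.foldr (fun p acc => (alphaHom p.1).comp ((betaHom p.2.1).comp acc))
          (lamOf d.2)))

/-- The product `deg(h₁)⋯deg(h_k)` of the degrees of the `β_i` in decomposition data. -/
def degProd {K : Type*} [CommRing K] (d : DecompData K) : ℕ :=
  match d.1 with
  | none => 1
  | some (_, h, rest) => h.1.natDegree * (rest.map fun p => p.2.1.natDegree).prod

/-- A field with a degree function of `ℤ`-valued type, whose residue field contains no proper
algebraic extension of `K`, and two derivations whose Jacobian lowers degrees. -/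
structure DegreeField (K F : Type*) [Field K] [Field F] [Algebra K F] where
  deg : F → ℤ
  deg_mul : ∀ {a b : F}, a ≠ 0 → b ≠ 0 → deg (a * b) = deg a + deg b
  add_lt : ∀ {a b : F} {n : ℤ}, (a = 0 ∨ deg a < n) → (b = 0 ∨ deg b < n) →
    (a + b = 0 ∨ deg (a + b) < n)
  deg_algebraMap : ∀ {κ : K}, κ ≠ 0 → deg (algebraMap K F κ) = 0
  exists_const : ∀ {θ : F}, θ ≠ 0 → deg θ = 0 → ∀ φ : Polynomial K, φ ≠ 0 →
    (Polynomial.aeval θ φ = 0 ∨ deg (Polynomial.aeval θ φ) < 0) →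
    ∃ κ : K, θ - algebraMap K F κ = 0 ∨ deg (θ - algebraMap K F κ) < 0
  dx : Derivation K F F
  dy : Derivation K F F
  jac_lt : ∀ {a b : F}, a ≠ 0 → b ≠ 0 →
    (dx a * dy b - dy a * dx b = 0 ∨ deg (dx a * dy b - dy a * dx b) < deg a + deg b)

namespace DegreeField

variable {K F : Type*} [Field K] [Field F] [Algebra K F] (D : DegreeField K F)

/-- `a` has degree less than `n`, where `0` has degree `-∞`. -/
def Lt (a : F) (n : ℤ) : Prop := a = 0 ∨ D.deg a < n

/-- The Jacobian determinant. -/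
def jac (a b : F) : F := D.dx a * D.dy b - D.dy a * D.dx b

variable {D}

theorem Lt.add {a b : F} {n : ℤ} (ha : D.Lt a n) (hb : D.Lt b n) : D.Lt (a + b) n :=
  D.add_lt ha hb

theorem Lt.mono {a : F} {m n : ℤ} (ha : D.Lt a m) (h : m ≤ n) : D.Lt a n :=
  ha.imp_right fun h' => h'.trans_le h

theorem Lt.mul {a b : F} {m n : ℤ} (ha : D.Lt a m) (hb : D.Lt b n) :
    D.Lt (a * b) (m + n - 1) := by
  by_cases h0 : a = 0
  · exact Or.inl (by simp [h0])
  by_cases h1 : b = 0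
  · exact Or.inl (by simp [h1])
  have h2 := ha.resolve_left h0
  have h3 := hb.resolve_left h1
  exact Or.inr (by rw [D.deg_mul h0 h1]; omega)

theorem lt_zero (n : ℤ) : D.Lt 0 n := Or.inl rfl

theorem lt_sum {ι : Type*} {s : Finset ι} {f : ι → F} {n : ℤ} (h : ∀ i ∈ s, D.Lt (f i) n) :
    D.Lt (∑ i ∈ s, f i) n :=
  Finset.sum_induction f (fun a => D.Lt a n) (fun _ _ => Lt.add) (lt_zero n) h

theorem lt_algebraMap (κ : K) : D.Lt (algebraMap K F κ) 1 := by
  by_cases h : κ = 0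
  · exact Or.inl (by simp [h])
  · exact Or.inr (by rw [D.deg_algebraMap h]; norm_num)

theorem Lt.neg {a : F} {n : ℤ} (ha : D.Lt a n) : D.Lt (-a) n := by
  have h := (lt_algebraMap (D := D) (-1)).mul ha
  simpa using h

theorem Lt.sub {a b : F} {n : ℤ} (ha : D.Lt a n) (hb : D.Lt b n) : D.Lt (a - b) n := by
  rw [sub_eq_add_neg]; exact ha.add hb.neg

theorem deg_one : D.deg 1 = 0 := by
  simpa using D.deg_algebraMap (one_ne_zero (α := K))

theorem deg_inv {a : F} (ha : a ≠ 0) : D.deg a⁻¹ = -D.deg a := by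
  have h := D.deg_mul ha (inv_ne_zero ha)
  rw [mul_inv_cancel₀ ha, deg_one] at h
  omega

theorem deg_pow {a : F} (ha : a ≠ 0) (n : ℕ) : D.deg (a ^ n) = n * D.deg a := by
  induction n with
  | zero => simp [deg_one]
  | succ n ih => rw [pow_succ, D.deg_mul (pow_ne_zero n ha) ha, ih]; push_cast; ring

theorem deg_zpow {a : F} (ha : a ≠ 0) (n : ℤ) : D.deg (a ^ n) = n * D.deg a := by
  obtain ⟨n, rfl | rfl⟩ := n.eq_nat_or_neg
  · rw [zpow_natCast, deg_pow ha]
  · rw [zpow_neg, zpow_natCast, deg_inv (pow_ne_zero n ha), deg_pow ha]; ring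

theorem lt_mul_iff {a c : F} {n : ℤ} (hc : c ≠ 0) :
    D.Lt (c * a) (D.deg c + n) ↔ D.Lt a n := by
  by_cases h0 : a = 0
  · simp [h0, lt_zero]
  · simp only [Lt, h0, mul_eq_zero, hc, or_self, false_or, D.deg_mul hc h0]
    omega

theorem not_lt_deg {a : F} (ha : a ≠ 0) {n : ℤ} (h : n ≤ D.deg a) : ¬ D.Lt a n := by
  rintro (h' | h')
  · exact ha h'
  · omega

theorem lt_aeval {θ : F} (hθ : D.Lt θ 1) (φ : Polynomial K) :
    D.Lt (Polynomial.aeval θ φ) 1 := by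
  have hpow : ∀ n : ℕ, D.Lt (θ ^ n) 1 := fun n => by
    induction n with
    | zero => exact Or.inr (by simp [deg_one])
    | succ n ih => rw [pow_succ]; simpa using ih.mul hθ
  rw [Polynomial.aeval_eq_sum_range]
  refine lt_sum fun i _ => ?_
  rw [Algebra.smul_def]
  simpa using (lt_algebraMap _).mul (hpow i)

theorem jac_zpow_mul {M η : F} (hM : M ≠ 0) (hη : η ≠ 0) (s t u v : ℤ) :
    D.jac (M ^ s * η ^ t) (η ^ u * M ^ v) * (M * η) =
      (s * u - t * v : ℤ) * ((M ^ s * η ^ t) * (η ^ u * M ^ v)) * D.jac M η := by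
  simp only [jac, Derivation.leibniz, Derivation.leibniz_zpow, smul_eq_mul, zsmul_eq_mul,
    zpow_sub_one₀ hM, zpow_sub_one₀ hη]
  generalize M ^ s = a, η ^ t = b, η ^ u = c, M ^ v = d
  push_cast
  field_simp
  ring

theorem jac_sub_algebraMap (a b : F) (κ : K) :
    D.jac a (b - algebraMap K F κ) = D.jac a b := by
  simp [jac]

theorem jac_self_algebraMap (a : F) (κ : K) : D.jac a (algebraMap K F κ) = 0 := by
  simp [jac]

theorem jac_mul_ne_zero_and_deg {M η : F} (hM : M ≠ 0) (hη : η ≠ 0) (hJ : D.jac M η ≠ 0)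
    {s t u v : ℤ} (h : s * u - t * v = 1) :
    D.jac (M ^ s * η ^ t) (η ^ u * M ^ v) ≠ 0 ∧
    D.deg (M ^ s * η ^ t) + D.deg (η ^ u * M ^ v) - D.deg (D.jac (M ^ s * η ^ t) (η ^ u * M ^ v)) =
      D.deg M + D.deg η - D.deg (D.jac M η) := by
  have h1 := jac_zpow_mul (D := D) hM hη s t u v
  rw [h, Int.cast_one, one_mul] at h1
  have hP : M ^ s * η ^ t ≠ 0 := mul_ne_zero (zpow_ne_zero _ hM) (zpow_ne_zero _ hη)
  have hQ : η ^ u * M ^ v ≠ 0 := mul_ne_zero (zpow_ne_zero _ hη) (zpow_ne_zero _ hM)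
  have h2 : D.jac (M ^ s * η ^ t) (η ^ u * M ^ v) ≠ 0 := by
    intro h0
    rw [h0, zero_mul] at h1
    exact mul_ne_zero (mul_ne_zero hP hQ) hJ h1.symm
  refine ⟨h2, ?_⟩
  have h3 := congrArg D.deg h1
  rw [D.deg_mul h2 (mul_ne_zero hM hη), D.deg_mul hM hη,
    D.deg_mul (mul_ne_zero hP hQ) hJ, D.deg_mul hP hQ] at h3
  omega

end DegreeField

theorem Polynomial.rootMultiplicity_le_of_support {K : Type*} [Field K] {p : Polynomial K}
    (hp : p ≠ 0) {κ : K} (hκ : κ ≠ 0) {q : ℕ}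
    (h : ∀ i ∈ p.support, ∀ j ∈ p.support, i ≤ j + q) : p.rootMultiplicity κ ≤ q := by
  have h1 : p.natDegree ≤ p.natTrailingDegree + q :=
    h _ (Polynomial.natDegree_mem_support_of_nonzero hp) _
      (Polynomial.natTrailingDegree_mem_support_of_nonzero hp)
  obtain ⟨r, hr⟩ : Polynomial.X ^ p.natTrailingDegree ∣ p :=
    Polynomial.X_pow_dvd_iff.2 fun d hd => Polynomial.coeff_eq_zero_of_lt_natTrailingDegree hd
  have hc : IsCoprime ((Polynomial.X - Polynomial.C κ) ^ p.rootMultiplicity κ)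
      (Polynomial.X ^ p.natTrailingDegree) := by
    refine IsCoprime.pow ?_
    simpa using Polynomial.isCoprime_X_sub_C_of_isUnit_sub (a := κ) (b := 0) (by simpa using hκ)
  have h2 := hc.mul_dvd (Polynomial.pow_rootMultiplicity_dvd p κ) ⟨r, hr⟩
  have h3 := Polynomial.natDegree_le_of_dvd h2 hp
  rw [Polynomial.natDegree_mul (pow_ne_zero _ (Polynomial.X_sub_C_ne_zero κ)) (by simp)] at h3
  simp at h3
  omega

namespace DegreeField

variable {K F : Type*} [Field K] [Field F] [Algebra K F] {D : DegreeField K F}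

/-- Rewriting a Laurent polynomial expression in `M`, `η` after the unimodular change of
monomials `(M, η) ↦ (M ^ s * η ^ t, η ^ a * M ^ b)`. -/
theorem exists_unimodular_expansion {M η : F} (hM : M ≠ 0) (hη : η ≠ 0) {a b s t : ℤ}
    (ha : 0 < a) (h : s * a - t * b = 1) (T : Finset (ℤ × ℕ)) (c : ℤ × ℕ → K)
    (hc : ∀ x ∈ T, c x ≠ 0) (E : ℤ) (q : ℕ) (hex : ∃ x ∈ T, E ≤ a * x.1 - b * x.2)
    (hq : ∀ x ∈ T, E ≤ a * x.1 - b * x.2 → (x.2 : ℤ) < a * (q + 1)) :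
    ∃ (S : Finset ℤ) (r : ℤ → Polynomial K) (δ₀ : ℤ) (J : ℕ), δ₀ ∈ S ∧ (∀ δ ∈ S, δ ≤ δ₀) ∧
      E ≤ δ₀ ∧ r δ₀ ≠ 0 ∧ (∀ κ : K, κ ≠ 0 → (r δ₀).rootMultiplicity κ ≤ q) ∧
      (η ^ a * M ^ b) ^ J * ∑ x ∈ T, algebraMap K F (c x) * (M ^ x.1 * η ^ x.2) =
        ∑ δ ∈ S, (M ^ s * η ^ t) ^ δ * Polynomial.aeval (η ^ a * M ^ b) (r δ) := by
  classical
  let w : ℤ × ℕ → ℤ := fun x => a * x.1 - b * x.2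
  let J : ℕ := ∑ x ∈ T, (s * x.2 - t * x.1).natAbs
  let e : ℤ × ℕ → ℕ := fun x => (s * x.2 - t * x.1 + J).toNat
  have he : ∀ x ∈ T, (e x : ℤ) = s * x.2 - t * x.1 + J := fun x hx => by
    have h1 : (s * x.2 - t * x.1).natAbs ≤ J :=
      Finset.single_le_sum (f := fun x : ℤ × ℕ => (s * x.2 - t * x.1).natAbs)
        (fun _ _ => Nat.zero_le _) hx
    have h2 : 0 ≤ s * x.2 - t * x.1 + J := by omega
    exact Int.toNat_of_nonneg h2
  have hfst : ∀ x ∈ T, x.1 = s * w x + b * (e x - J) := fun x hx => by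
    rw [he x hx]; simp only [w]; linear_combination (-x.1) * h
  have hsnd : ∀ x ∈ T, (x.2 : ℤ) = t * w x + a * (e x - J) := fun x hx => by
    rw [he x hx]; simp only [w]; linear_combination (-(x.2 : ℤ)) * h
  let r : ℤ → Polynomial K := fun δ => ∑ x ∈ T with w x = δ, Polynomial.monomial (e x) (c x)
  obtain ⟨x₁, hx₁, hE⟩ := hex
  obtain ⟨x₀, hx₀, hmax⟩ := T.exists_max_image w ⟨x₁, hx₁⟩
  have hE₀ : E ≤ w x₀ := hE.trans (hmax x₁ hx₁)
  have hcoeff : (r (w x₀)).coeff (e x₀) = c x₀ := by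
    simp only [r, Polynomial.finsetSum_coeff, Polynomial.coeff_monomial]
    rw [Finset.sum_eq_single_of_mem x₀ (by simp [hx₀])]
    · simp
    · intro y hy hne
      rw [Finset.mem_filter] at hy
      rw [if_neg]
      intro hey
      refine hne (Prod.ext ?_ ?_)
      · rw [hfst y hy.1, hfst x₀ hx₀, hy.2, hey]
      · have := hsnd y hy.1
        rw [hy.2, hey, ← hsnd x₀ hx₀] at this
        exact_mod_cast this
  have hr : r (w x₀) ≠ 0 := by
    intro h0
    rw [h0, Polynomial.coeff_zero] at hcoeff
    exact hc x₀ hx₀ hcoeff.symm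
  have hsupp : ∀ i ∈ (r (w x₀)).support, ∃ x ∈ T, w x = w x₀ ∧ e x = i := by
    intro i hi
    rw [Polynomial.mem_support_iff] at hi
    simp only [r, Polynomial.finsetSum_coeff, Polynomial.coeff_monomial] at hi
    obtain ⟨x, hx, hne⟩ := Finset.exists_ne_zero_of_sum_ne_zero hi
    rw [Finset.mem_filter] at hx
    refine ⟨x, hx.1, hx.2, ?_⟩
    by_contra hcon
    exact hne (if_neg hcon)
  refine ⟨T.image w, r, w x₀, J, Finset.mem_image_of_mem w hx₀, ?_, hE₀, hr, ?_, ?_⟩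
  · intro δ hδ
    obtain ⟨x, hx, rfl⟩ := Finset.mem_image.1 hδ
    exact hmax x hx
  · intro κ hκ
    refine Polynomial.rootMultiplicity_le_of_support hr hκ fun i hi j hj => ?_
    obtain ⟨x, hx, hwx, rfl⟩ := hsupp i hi
    obtain ⟨y, hy, hwy, rfl⟩ := hsupp j hj
    have h1 := hsnd x hx
    have h2 := hsnd y hy
    have h3 := hq x hx (by rw [← hwx] at hE₀; exact hE₀)
    rw [hwx] at h1
    rw [hwy] at h2
    have h4 : a * ((e x : ℤ) - e y) < a * (q + 1) := by nlinarith
    have h5 := lt_of_mul_lt_mul_left h4 ha.le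
    omega
  · have hterm : ∀ x ∈ T, (η ^ a * M ^ b) ^ J * (algebraMap K F (c x) * (M ^ x.1 * η ^ x.2)) =
        (M ^ s * η ^ t) ^ w x * Polynomial.aeval (η ^ a * M ^ b)
          (Polynomial.monomial (e x) (c x)) := by
      intro x hx
      have hθ : η ^ a * M ^ b ≠ 0 := mul_ne_zero (zpow_ne_zero _ hη) (zpow_ne_zero _ hM)
      have h1 : (η ^ a * M ^ b) ^ J * (M ^ x.1 * η ^ x.2) =
          (M ^ s * η ^ t) ^ w x * (η ^ a * M ^ b) ^ e x := by
        have h2 : (η ^ a * M ^ b) ^ e x =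
            (η ^ a * M ^ b) ^ J * (η ^ a * M ^ b) ^ ((e x : ℤ) - J) := by
          rw [← zpow_natCast, ← zpow_natCast, ← zpow_add₀ hθ]
          congr 1
          ring
        rw [h2, ← zpow_natCast η, hfst x hx, hsnd x hx, zpow_add₀ hM, zpow_add₀ hη,
          zpow_mul, zpow_mul, zpow_mul, zpow_mul, mul_zpow, mul_zpow]
        ring
      rw [Polynomial.aeval_monomial]
      linear_combination (algebraMap K F (c x)) * h1
    rw [Finset.mul_sum, Finset.sum_congr rfl hterm]
    simp only [r, map_sum, Finset.mul_sum]
    rw [← Finset.sum_fiberwise_of_maps_to (fun x hx => Finset.mem_image_of_mem w hx)]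
    refine Finset.sum_congr rfl fun δ _ => Finset.sum_congr rfl fun x hx => ?_
    rw [(Finset.mem_filter.1 hx).2]

/-- Without cancellation in the leading term, the degree is the expected one. -/
theorem not_lt_of_leading_not_lt {M θ : F} (hM : M ≠ 0) (hMd : 0 < D.deg M)
    (hθ : D.Lt θ 1) {S : Finset ℤ} {r : ℤ → Polynomial K} {δ₀ : ℤ}
    (hδ₀ : δ₀ ∈ S) (hmax : ∀ δ ∈ S, δ ≤ δ₀) (hr : ¬ D.Lt (Polynomial.aeval θ (r δ₀)) 0) :
    ¬ D.Lt (∑ δ ∈ S, M ^ δ * Polynomial.aeval θ (r δ)) (δ₀ * D.deg M) := by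
  classical
  intro hlt
  have hterm : ∀ δ : ℤ, D.Lt (M ^ δ * Polynomial.aeval θ (r δ)) (δ * D.deg M + 1) := fun δ => by
    rw [← deg_zpow hM]
    exact (lt_mul_iff (zpow_ne_zero _ hM)).2 (lt_aeval hθ _)
  rw [← Finset.add_sum_erase _ _ hδ₀] at hlt
  have h1 : D.Lt (∑ δ ∈ S.erase δ₀, M ^ δ * Polynomial.aeval θ (r δ)) (δ₀ * D.deg M) := by
    refine lt_sum fun δ hδ => (hterm δ).mono ?_
    rw [Finset.mem_erase] at hδ
    have h2 : δ + 1 ≤ δ₀ := lt_of_le_of_ne (hmax δ hδ.2) hδ.1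
    nlinarith
  have h3 := hlt.sub h1
  rw [add_sub_cancel_right, ← add_zero (δ₀ * D.deg M), ← deg_zpow hM,
    lt_mul_iff (zpow_ne_zero _ hM)] at h3
  exact hr h3

/-- The lower degree bound for polynomial expressions: each cancellation of leading terms can
lower the degree only by a bounded amount, controlled by the Jacobian. -/
theorem not_lt_of_rootMultiplicity_le (N : ℕ) {M θ : F} (hM : M ≠ 0) (hθ : θ ≠ 0)
    (hMd : 0 < D.deg M) (hθd : D.deg θ = 0) (hJ : D.jac M θ ≠ 0)
    (hN : D.deg M - D.deg (D.jac M θ) ≤ N) {S : Finset ℤ} {r : ℤ → Polynomial K} {δ₀ : ℤ}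
    (hδ₀ : δ₀ ∈ S) (hmax : ∀ δ ∈ S, δ ≤ δ₀) (hr : r δ₀ ≠ 0) {q : ℕ}
    (hq : ∀ κ : K, κ ≠ 0 → (r δ₀).rootMultiplicity κ ≤ q) :
    ¬ D.Lt (∑ δ ∈ S, M ^ δ * Polynomial.aeval θ (r δ))
      (δ₀ * D.deg M - q * (D.deg M - D.deg (D.jac M θ) - 1)) := by
  classical
  induction N generalizing M θ S r δ₀ q with
  | zero =>
    have := (D.jac_lt hM hθ).resolve_left hJ
    change D.deg (D.jac M θ) < _ at this
    push_cast at hN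
    omega
  | succ N ih =>
    have hA := (D.jac_lt hM hθ).resolve_left hJ
    change D.deg (D.jac M θ) < _ at hA
    have hθ1 : D.Lt θ 1 := Or.inr (by omega)
    by_cases hcan : D.Lt (Polynomial.aeval θ (r δ₀)) 0
    swap
    · intro hlt
      refine not_lt_of_leading_not_lt hM hMd hθ1 hδ₀ hmax hcan (hlt.mono ?_)
      nlinarith
    obtain ⟨κ, hκ⟩ := D.exists_const hθ hθd _ hr hcan
    have hκ0 : κ ≠ 0 := by
      rintro rfl
      rw [map_zero, sub_zero] at hκ
      exact not_lt_deg hθ hθd.ge hκ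
    obtain ⟨η, hηdef⟩ : ∃ η, η = θ - algebraMap K F κ := ⟨_, rfl⟩
    have hJη : D.jac M η = D.jac M θ := by rw [hηdef, jac_sub_algebraMap]
    have hη : η ≠ 0 := by
      rintro rfl
      rw [eq_comm, sub_eq_zero] at hηdef
      rw [hηdef, jac_self_algebraMap] at hJ
      exact hJ rfl
    rw [← hηdef] at hκ
    have hηd := hκ.resolve_left hη
    have hA' := (D.jac_lt hM hη).resolve_left (by rw [← hJη] at hJ; exact hJ)
    change D.deg (D.jac M η) < _ at hA'
    obtain ⟨a, b, hab, hMa, hηb⟩ := Int.exists_gcd_one (m := D.deg M) (n := -D.deg η)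
      (Int.gcd_pos_of_ne_zero_left _ hMd.ne')
    obtain ⟨g, hg⟩ : ∃ g : ℤ, g = (Int.gcd (D.deg M) (-D.deg η) : ℤ) := ⟨_, rfl⟩
    rw [← hg] at hMa hηb
    have hgpos : 0 < g := by
      rw [hg]; exact_mod_cast Int.gcd_pos_of_ne_zero_left _ hMd.ne'
    have hapos : 0 < a := by by_contra hcon; nlinarith
    have hbpos : 0 < b := by by_contra hcon; nlinarith
    obtain ⟨s, t, hst⟩ := Int.isCoprime_iff_gcd_eq_one.2 hab
    have hst' : s * a - (-t) * b = 1 := by linear_combination hst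
    obtain ⟨n, hn⟩ : ∃ n : ℕ, ∀ δ ∈ S, ((r δ).comp (Polynomial.X + Polynomial.C κ)).natDegree < n :=
      ⟨S.sup (fun δ => ((r δ).comp (Polynomial.X + Polynomial.C κ)).natDegree) + 1, fun δ hδ =>
        Nat.lt_succ_of_le (Finset.le_sup
          (f := fun δ => ((r δ).comp (Polynomial.X + Polynomial.C κ)).natDegree) hδ)⟩
    obtain ⟨c, hcdef⟩ : ∃ c : ℤ × ℕ → K,
        c = fun x => ((r x.1).comp (Polynomial.X + Polynomial.C κ)).coeff x.2 := ⟨_, rfl⟩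
    have hsum : ∑ δ ∈ S, M ^ δ * Polynomial.aeval θ (r δ) =
        ∑ x ∈ (S ×ˢ Finset.range n).filter (fun x => c x ≠ 0),
          algebraMap K F (c x) * (M ^ x.1 * η ^ x.2) := by
      rw [Finset.sum_filter_of_ne (p := fun x => c x ≠ 0)
        (by intro x _ hx h0; exact hx (by rw [h0]; simp)), Finset.sum_product]
      refine Finset.sum_congr rfl fun δ hδ => ?_
      have h1 : Polynomial.aeval θ (r δ) =
          Polynomial.aeval η ((r δ).comp (Polynomial.X + Polynomial.C κ)) := by
        rw [Polynomial.aeval_comp]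
        simp [hηdef]
      rw [h1, Polynomial.aeval_eq_sum_range' (hn δ hδ), Finset.mul_sum]
      refine Finset.sum_congr rfl fun k _ => ?_
      rw [Algebra.smul_def, hcdef]
      ring
    obtain ⟨k, hk⟩ : ∃ k, k = (r δ₀).rootMultiplicity κ := ⟨_, rfl⟩
    have hkq : k ≤ q := hk ▸ hq κ hκ0
    have hck : c (δ₀, k) ≠ 0 := by
      have h0 : (r δ₀).comp (Polynomial.X + Polynomial.C κ) ≠ 0 := by
        rwa [Ne, Polynomial.comp_X_add_C_eq_zero_iff]
      rw [hcdef, hk, Polynomial.rootMultiplicity_eq_natTrailingDegree]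
      exact Polynomial.coeff_natTrailingDegree_ne_zero.2 h0
    obtain ⟨S', r', δ', J, hδ'S, hmax', hE', hr', hq', heq⟩ :=
      exists_unimodular_expansion hM hη hapos hst'
        ((S ×ˢ Finset.range n).filter (fun x => c x ≠ 0)) c
        (fun x hx => (Finset.mem_filter.1 hx).2) (a * δ₀ - b * k) k
        ⟨(δ₀, k), by
          simp only [Finset.mem_filter, Finset.mem_product, Finset.mem_range]
          refine ⟨⟨hδ₀, ?_⟩, hck⟩
          refine lt_of_le_of_lt (Polynomial.le_natDegree_of_ne_zero ?_) (hn δ₀ hδ₀)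
          rw [hcdef] at hck
          exact hck, le_rfl⟩
        (by
          intro x hx hle
          simp only [Finset.mem_filter, Finset.mem_product] at hx
          have h1 := hmax _ hx.1.1
          have h2 : b * (x.2 : ℤ) ≤ b * k := by nlinarith
          have h3 := le_of_mul_le_mul_left h2 hbpos
          nlinarith)
    rw [← hsum] at heq
    have hJ' : D.jac M η ≠ 0 := by rwa [hJη]
    obtain ⟨hJ2, hA2⟩ := jac_mul_ne_zero_and_deg hM hη hJ' hst'
    have hM2 : M ^ s * η ^ (-t) ≠ 0 := mul_ne_zero (zpow_ne_zero _ hM) (zpow_ne_zero _ hη)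
    have hθ2 : η ^ a * M ^ b ≠ 0 := mul_ne_zero (zpow_ne_zero _ hη) (zpow_ne_zero _ hM)
    have hdM2 : D.deg (M ^ s * η ^ (-t)) = g := by
      rw [D.deg_mul (zpow_ne_zero _ hM) (zpow_ne_zero _ hη), deg_zpow hM, deg_zpow hη]
      linear_combination s * hMa + t * hηb + g * hst
    have hdθ2 : D.deg (η ^ a * M ^ b) = 0 := by
      rw [D.deg_mul (zpow_ne_zero _ hη) (zpow_ne_zero _ hM), deg_zpow hM, deg_zpow hη]
      linear_combination b * hMa - a * hηb
    rw [hdM2, hdθ2, hJη, add_zero] at hA2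
    have key := ih hM2 hθ2 (by rw [hdM2]; exact hgpos) hdθ2 hJ2
      (by rw [hdM2, hA2]; push_cast at hN; omega) hδ'S hmax' hr' hq'
    intro hlt
    apply key
    rw [← heq, hdM2, hA2]
    have h0 : D.deg ((η ^ a * M ^ b) ^ J) = 0 := by rw [deg_pow hθ2, hdθ2, mul_zero]
    have h1 := (lt_mul_iff (pow_ne_zero J hθ2)).2 hlt
    rw [h0, zero_add] at h1
    refine h1.mono ?_
    have hkq' : (k : ℤ) ≤ q := by exact_mod_cast hkq
    have h2 : (a * δ₀ - b * k) * g ≤ δ' * g := mul_le_mul_of_nonneg_right hE' hgpos.le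
    have h3 : (a * δ₀ - b * k) * g = δ₀ * D.deg M + k * D.deg η := by
      linear_combination (-δ₀) * hMa + k * hηb
    have h4 : (k : ℤ) * (D.deg M - D.deg (D.jac M θ) - 1) ≤
        q * (D.deg M - D.deg (D.jac M θ) - 1) :=
      mul_le_mul_of_nonneg_right hkq' (by omega)
    nlinarith

/-- If a nonconstant polynomial expression in `f` and `g` has degree at most `0`, then one of
`f`, `g` has its leading term cancelled by a power of the other one. -/
theorem exists_reduction {f g : F} (hf : f ≠ 0) (hg : g ≠ 0) (hfd : 0 < D.deg f)
    (hgd : 0 < D.deg g) (hJ : D.jac f g ≠ 0) (hJd : D.deg (D.jac f g) = 0)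
    (T : Finset (ℕ × ℕ)) (c : ℕ × ℕ → K) (hc : ∀ x ∈ T, c x ≠ 0)
    (hT : ∃ x ∈ T, x ≠ 0)
    (hlt : D.Lt (∑ x ∈ T, algebraMap K F (c x) * (f ^ x.1 * g ^ x.2)) 1) :
    (∃ (κ : K) (k : ℕ), D.Lt (f - algebraMap K F κ * g ^ k) (D.deg f)) ∨
    (∃ (κ : K) (k : ℕ), D.Lt (g - algebraMap K F κ * f ^ k) (D.deg g)) := by
  classical
  obtain ⟨a, b, hab, hfa, hgb⟩ := Int.exists_gcd_one (m := D.deg f) (n := D.deg g)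
    (Int.gcd_pos_of_ne_zero_left _ hfd.ne')
  obtain ⟨d, hd⟩ : ∃ d : ℤ, d = (Int.gcd (D.deg f) (D.deg g) : ℤ) := ⟨_, rfl⟩
  rw [← hd] at hfa hgb
  have hdpos : 0 < d := by
    rw [hd]; exact_mod_cast Int.gcd_pos_of_ne_zero_left _ hfd.ne'
  have hapos : 0 < a := by by_contra hcon; nlinarith
  have hbpos : 0 < b := by by_contra hcon; nlinarith
  obtain ⟨s, t, hst⟩ := Int.isCoprime_iff_gcd_eq_one.2 hab
  have hst' : s * a - t * (-b) = 1 := by linear_combination hst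
  obtain ⟨x₁, hx₁, hne⟩ := hT
  obtain ⟨x₀, hx₀, hmax⟩ := T.exists_max_image (fun x : ℕ × ℕ => a * x.1 + b * x.2) ⟨x₁, hx₁⟩
  obtain ⟨E, hE⟩ : ∃ E : ℤ, E = a * x₀.1 + b * x₀.2 := ⟨_, rfl⟩
  have hEpos : 0 < E := by
    rw [hE]
    refine lt_of_lt_of_le ?_ (hmax x₁ hx₁)
    rcases Nat.eq_zero_or_pos x₁.1 with h1 | h1
    · rcases Nat.eq_zero_or_pos x₁.2 with h2 | h2
      · exact absurd (Prod.ext h1 h2) hne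
      · have : (0 : ℤ) < x₁.2 := by exact_mod_cast h2
        positivity
    · have : (0 : ℤ) < x₁.1 := by exact_mod_cast h1
      positivity
  obtain ⟨q, hq⟩ : ∃ q : ℕ, (q : ℤ) = E / (a * b) :=
    ⟨(E / (a * b)).toNat, Int.toNat_of_nonneg (by positivity)⟩
  have hq1 : E < a * b * (q + 1) := by
    have h1 := Int.emod_lt_of_pos E (mul_pos hapos hbpos)
    have h2 := Int.emod_add_mul_ediv E (a * b)
    rw [hq]
    linarith
  have hq2 : a * b * q ≤ E := by rw [hq]; exact Int.mul_ediv_self_le (by positivity)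
  let ι : ℕ × ℕ ↪ ℤ × ℕ := ⟨fun x => (x.1, x.2), fun x y h => by
    simp only [Prod.mk.injEq, Nat.cast_inj] at h
    exact Prod.ext h.1 h.2⟩
  obtain ⟨S, r, δ, J, hδS, hmaxS, hEδ, hr, hrq, heq⟩ :=
    exists_unimodular_expansion hf hg hapos hst' (T.map ι) (fun x => c (x.1.toNat, x.2))
      (by
        intro x hx
        obtain ⟨y, hy, rfl⟩ := Finset.mem_map.1 hx
        exact hc y hy) E q
      ⟨ι x₀, Finset.mem_map_of_mem ι hx₀, by
        change E ≤ a * (x₀.1 : ℤ) - (-b) * (x₀.2 : ℤ)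
        linarith [hE]⟩
      (by
        intro x hx _
        obtain ⟨y, hy, rfl⟩ := Finset.mem_map.1 hx
        have h1 : a * y.1 + b * y.2 ≤ E := hE ▸ hmax y hy
        have h2 : (0 : ℤ) ≤ a * y.1 := by positivity
        have h3 : b * (y.2 : ℤ) < b * (a * (q + 1)) := by nlinarith
        exact lt_of_mul_lt_mul_left h3 hbpos.le)
  have hsum : ∑ x ∈ T.map ι, algebraMap K F (c (x.1.toNat, x.2)) * (f ^ x.1 * g ^ x.2) =
      ∑ x ∈ T, algebraMap K F (c x) * (f ^ x.1 * g ^ x.2) := by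
    rw [Finset.sum_map]
    refine Finset.sum_congr rfl fun x _ => ?_
    change algebraMap K F (c (((x.1 : ℕ) : ℤ).toNat, x.2)) * (f ^ ((x.1 : ℕ) : ℤ) * g ^ x.2) = _
    rw [Int.toNat_natCast, zpow_natCast]
  rw [hsum] at heq
  obtain ⟨hJ2, hA2⟩ := jac_mul_ne_zero_and_deg hf hg hJ hst'
  have hM : f ^ s * g ^ t ≠ 0 := mul_ne_zero (zpow_ne_zero _ hf) (zpow_ne_zero _ hg)
  have hθ : g ^ a * f ^ (-b) ≠ 0 := mul_ne_zero (zpow_ne_zero _ hg) (zpow_ne_zero _ hf)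
  have hdM : D.deg (f ^ s * g ^ t) = d := by
    rw [D.deg_mul (zpow_ne_zero _ hf) (zpow_ne_zero _ hg), deg_zpow hf, deg_zpow hg]
    linear_combination s * hfa + t * hgb + d * hst
  have hdθ : D.deg (g ^ a * f ^ (-b)) = 0 := by
    rw [D.deg_mul (zpow_ne_zero _ hg) (zpow_ne_zero _ hf), deg_zpow hf, deg_zpow hg]
    linear_combination (-b) * hfa + a * hgb
  rw [hdM, hdθ, hJd, add_zero, sub_zero] at hA2
  have hlt' : D.Lt (∑ δ ∈ S, (f ^ s * g ^ t) ^ δ * Polynomial.aeval (g ^ a * f ^ (-b)) (r δ)) 1 := by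
    rw [← heq]
    have h0 : D.deg ((g ^ a * f ^ (-b)) ^ J) = 0 := by rw [deg_pow hθ, hdθ, mul_zero]
    have h1 := (lt_mul_iff (pow_ne_zero J hθ)).2 hlt
    rwa [h0, zero_add] at h1
  have hδd : E * d ≤ δ * d := mul_le_mul_of_nonneg_right hEδ hdpos.le
  have hcan : D.Lt (Polynomial.aeval (g ^ a * f ^ (-b)) (r δ)) 0 := by
    by_contra hcan
    refine not_lt_of_leading_not_lt hM (by rw [hdM]; exact hdpos) (Or.inr (by rw [hdθ]; norm_num))
      hδS hmaxS hcan (hlt'.mono ?_)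
    rw [hdM]
    nlinarith
  obtain ⟨κ, hκ⟩ := D.exists_const hθ hdθ _ hr hcan
  have hκ0 : κ ≠ 0 := by
    rintro rfl
    rw [map_zero, sub_zero] at hκ
    exact not_lt_deg hθ hdθ.ge hκ
  have hab1 : a = 1 ∨ b = 1 := by
    by_contra hcon
    push Not at hcon
    have ha2 : 2 ≤ a := by omega
    have hb2 : 2 ≤ b := by omega
    obtain ⟨N, hN⟩ := Int.eq_ofNat_of_zero_le
      (by omega : 0 ≤ D.deg (f ^ s * g ^ t) - D.deg (D.jac (f ^ s * g ^ t) (g ^ a * f ^ (-b))))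
    refine not_lt_of_rootMultiplicity_le N hM hθ (by rw [hdM]; exact hdpos) hdθ hJ2 hN.le
      hδS hmaxS hr hrq (hlt'.mono ?_)
    rw [hdM, hA2]
    have h1 : (0 : ℤ) ≤ q := by positivity
    have h2 : a + b ≤ a * b := by nlinarith
    rcases h1.eq_or_lt with h0 | h0
    · rw [← h0]; nlinarith
    · have h3 : q * d * (a + b) ≤ q * d * (a * b) :=
        mul_le_mul_of_nonneg_left h2 (by positivity)
      have h4 : a * b * q * d ≤ E * d := mul_le_mul_of_nonneg_right hq2 hdpos.le
      nlinarith
  change D.Lt _ _ at hκ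
  rcases hab1 with rfl | rfl
  · right
    refine ⟨κ, b.toNat, ?_⟩
    have hb : ((b.toNat : ℕ) : ℤ) = b := Int.toNat_of_nonneg hbpos.le
    have h1 : g - algebraMap K F κ * f ^ b.toNat =
        f ^ b.toNat * (g ^ (1 : ℤ) * f ^ (-b) - algebraMap K F κ) := by
      rw [← zpow_natCast, hb, zpow_neg, zpow_one]
      have := zpow_ne_zero b hf
      field_simp
    have h2 : D.deg g = D.deg (f ^ b.toNat) + 0 := by
      rw [deg_pow hf, hb]; linear_combination hgb - b * hfa
    rw [h1, h2]
    exact (lt_mul_iff (pow_ne_zero _ hf)).2 hκ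
  · left
    refine ⟨κ⁻¹, a.toNat, ?_⟩
    have ha : ((a.toNat : ℕ) : ℤ) = a := Int.toNat_of_nonneg hapos.le
    have hκ' : algebraMap K F κ ≠ 0 := by simpa using hκ0
    have h1 : f - algebraMap K F κ⁻¹ * g ^ a.toNat =
        f * ((g ^ a * f ^ (-1 : ℤ) - algebraMap K F κ) * algebraMap K F (-κ⁻¹)) := by
      rw [← zpow_natCast, ha, zpow_neg, zpow_one, map_neg, map_inv₀]
      field_simp
      ring
    rw [h1, ← add_zero (D.deg f)]
    refine (lt_mul_iff hf).2 ?_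
    simpa using hκ.mul (lt_algebraMap (-κ⁻¹))

end DegreeField

theorem Derivation.exists_extend_fractionRing {R B F : Type*} [CommRing R] [CommRing B] [IsDomain B]
    [Field F] [Algebra R B] [Algebra B F] [Algebra R F] [IsScalarTower R B F] [IsFractionRing B F]
    (d : Derivation R B B) :
    ∃ D : Derivation R F F, ∀ b, D (algebraMap B F b) = algebraMap B F (d b) := by
  have := Algebra.FormallyEtale.of_isLocalization (Rₘ := F) (nonZeroDivisors B)
  have hb := KaehlerDifferential.isBaseChange_of_formallyEtale R B F
  refine ⟨(hb.lift ((Algebra.linearMap B F).comp d.liftKaehlerDifferential)).compDer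
    (KaehlerDifferential.D R F), fun b => ?_⟩
  have h := hb.lift_eq ((Algebra.linearMap B F).comp d.liftKaehlerDifferential)
    (KaehlerDifferential.D R B b)
  rw [KaehlerDifferential.map_D] at h
  simpa using h

theorem Derivation.exists_coeff_map {K L : Type*} [CommRing K] [CommRing L] [Algebra K L]
    (δ : Derivation K L L) :
    ∃ d : Derivation K (Polynomial L) (Polynomial L), ∀ p i, (d p).coeff i = δ (p.coeff i) :=
  ⟨PolynomialModule.equivPolynomialSelf.compDer δ.mapCoeffs, fun _ _ => rfl⟩

namespace RatFunc

variable {L : Type*} [Field L]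

theorem eq_zero_or_intDegree_add_lt {a b : RatFunc L} {n : ℤ} (ha : a = 0 ∨ a.intDegree < n)
    (hb : b = 0 ∨ b.intDegree < n) : a + b = 0 ∨ (a + b).intDegree < n := by
  by_cases h : a + b = 0
  · exact Or.inl h
  by_cases h0 : a = 0
  · simpa [h0] using hb
  by_cases h1 : b = 0
  · simpa [h1] using ha
  · exact Or.inr ((intDegree_add_le h1 h).trans_lt
      (max_lt (ha.resolve_left h0) (hb.resolve_left h1)))

theorem eq_zero_or_intDegree_mul_lt {a b : RatFunc L} {m n : ℤ} (ha : a = 0 ∨ a.intDegree < m)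
    (hb : b = 0 ∨ b.intDegree < n) : a * b = 0 ∨ (a * b).intDegree < m + n - 1 := by
  by_cases h0 : a = 0
  · exact Or.inl (by simp [h0])
  by_cases h1 : b = 0
  · exact Or.inl (by simp [h1])
  have h2 := ha.resolve_left h0
  have h3 := hb.resolve_left h1
  exact Or.inr (by rw [intDegree_mul h0 h1]; omega)

theorem eq_zero_or_intDegree_polynomial_div_lt {p q : Polynomial L} {n : ℤ} (hq : q ≠ 0)
    (h : p = 0 ∨ (p.natDegree : ℤ) < n) :
    (algebraMap (Polynomial L) (RatFunc L) p / algebraMap _ _ q) = 0 ∨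
      (algebraMap (Polynomial L) (RatFunc L) p / algebraMap _ _ q).intDegree <
        n - q.natDegree := by
  by_cases hp : p = 0
  · exact Or.inl (by simp [hp])
  · right
    rw [intDegree_div (algebraMap_ne_zero hp) (algebraMap_ne_zero hq), intDegree_polynomial,
      intDegree_polynomial]
    have := h.resolve_left hp
    omega

/-- A derivation of the rational functions which lowers degrees of polynomials by `e` lowers all
degrees by `e`. -/
theorem eq_zero_or_intDegree_derivation_lt {K : Type*} [Field K] [Algebra K L]
    {D : Derivation K (RatFunc L) (RatFunc L)} {d : Polynomial L → Polynomial L}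
    (hD : ∀ p, D (algebraMap _ _ p) = algebraMap _ _ (d p)) {e : ℤ}
    (hd : ∀ p, d p = 0 ∨ ((d p).natDegree : ℤ) + e ≤ p.natDegree) {z : RatFunc L} (hz : z ≠ 0) :
    D z = 0 ∨ (D z).intDegree < z.intDegree - e + 1 := by
  have hq := z.denom_ne_zero
  have hp := num_ne_zero hz
  have h1 : D z = algebraMap (Polynomial L) (RatFunc L)
      (z.denom * d z.num - z.num * d z.denom) / algebraMap _ _ (z.denom ^ 2) := by
    conv_lhs => rw [← num_div_denom z]
    rw [Derivation.leibniz_div, hD, hD, smul_eq_mul, smul_eq_mul, smul_eq_mul]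
    simp only [map_sub, map_mul, map_pow]
    rw [inv_pow, div_eq_inv_mul]
  have h2 : z.denom * d z.num - z.num * d z.denom = 0 ∨
      ((z.denom * d z.num - z.num * d z.denom).natDegree : ℤ) <
        z.num.natDegree + z.denom.natDegree - e + 1 := by
    have aux : ∀ a b : Polynomial L, a ≠ 0 → a * d b = 0 ∨
        ((a * d b).natDegree : ℤ) + e ≤ a.natDegree + b.natDegree := by
      intro a b ha
      by_cases hb : d b = 0
      · exact Or.inl (by simp [hb])
      · right
        rw [Polynomial.natDegree_mul ha hb]
        have := (hd b).resolve_left hb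
        push_cast
        omega
    have h3 := aux _ z.num hq
    have h4 := aux _ z.denom hp
    have h5 := Polynomial.natDegree_sub_le (z.denom * d z.num) (z.num * d z.denom)
    rcases h3 with h3 | h3
    · rcases h4 with h4 | h4
      · exact Or.inl (by rw [h3, h4, sub_zero])
      · right
        rw [h3, zero_sub, Polynomial.natDegree_neg]
        omega
    · rcases h4 with h4 | h4
      · right
        rw [h4, sub_zero]
        omega
      · right
        omega
  have h3 := eq_zero_or_intDegree_polynomial_div_lt (pow_ne_zero 2 hq) h2
  rw [← h1, Polynomial.natDegree_pow] at h3
  refine h3.imp_right fun h => h.trans_le (le_of_eq ?_)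
  rw [intDegree]
  push_cast
  ring

theorem exists_sub_C_intDegree_neg {θ : RatFunc L} (hθ : θ ≠ 0) (h0 : θ.intDegree = 0) :
    ∃ ρ : L, θ - C ρ = 0 ∨ (θ - C ρ).intDegree < 0 := by
  have hq := θ.denom_ne_zero
  have hp := num_ne_zero hθ
  refine ⟨θ.num.leadingCoeff, ?_⟩
  have hdeg : θ.num.natDegree = θ.denom.natDegree := by
    rw [intDegree] at h0
    omega
  have h1 : θ - C θ.num.leadingCoeff = algebraMap (Polynomial L) (RatFunc L)
      (θ.num - Polynomial.C θ.num.leadingCoeff * θ.denom) / algebraMap _ _ θ.denom := by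
    conv_lhs => rw [← num_div_denom θ]
    rw [map_sub, map_mul, sub_div, algebraMap_C, mul_div_cancel_right₀ _ (algebraMap_ne_zero hq),
      num_div_denom]
  have h2 : θ.num - Polynomial.C θ.num.leadingCoeff * θ.denom = 0 ∨
      ((θ.num - Polynomial.C θ.num.leadingCoeff * θ.denom).natDegree : ℤ) <
        θ.denom.natDegree := by
    by_cases h : θ.num - Polynomial.C θ.num.leadingCoeff * θ.denom = 0
    · exact Or.inl h
    · right
      have h3 := Polynomial.degree_sub_lt_left (p := θ.num)
        (q := Polynomial.C θ.num.leadingCoeff * θ.denom)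
        (by rw [Polynomial.degree_C_mul (Polynomial.leadingCoeff_ne_zero.2 hp),
          Polynomial.degree_eq_natDegree hp, Polynomial.degree_eq_natDegree hq, hdeg]) hp
        (by rw [Polynomial.leadingCoeff_mul, Polynomial.leadingCoeff_C, θ.monic_denom.leadingCoeff,
          mul_one])
      rw [← hdeg]
      exact_mod_cast Polynomial.natDegree_lt_natDegree h h3
  have h3 := eq_zero_or_intDegree_polynomial_div_lt hq h2
  rwa [← h1, sub_self] at h3

variable {K : Type*} [Field K] [Algebra K L]

theorem aeval_eq_zero_of_intDegree_neg {θ : RatFunc L} (h0 : θ.intDegree = 0) {ρ : L}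
    (hρ : θ - C ρ = 0 ∨ (θ - C ρ).intDegree < 0) {φ : Polynomial K}
    (hφ : Polynomial.aeval θ φ = 0 ∨ (Polynomial.aeval θ φ).intDegree < 0) :
    Polynomial.aeval ρ φ = 0 := by
  have hC : ∀ ψ : Polynomial K, Polynomial.aeval (C ρ) ψ = C (Polynomial.aeval ρ ψ) := fun ψ =>
    (Polynomial.aeval_algebraMap_apply (RatFunc L) ρ ψ)
  have h1 : ∀ ψ : Polynomial K, Polynomial.aeval θ ψ - C (Polynomial.aeval ρ ψ) = 0 ∨
      (Polynomial.aeval θ ψ - C (Polynomial.aeval ρ ψ)).intDegree < 0 := by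
    intro ψ
    induction ψ using Polynomial.induction_on with
    | C a =>
      left
      rw [← hC, Polynomial.aeval_C, Polynomial.aeval_C, sub_self]
    | add p q hp hq =>
      rw [map_add, map_add, map_add, add_sub_add_comm]
      exact eq_zero_or_intDegree_add_lt hp hq
    | monomial n a ih =>
      obtain ⟨ψ, hψ⟩ : ∃ ψ, ψ = Polynomial.C a * Polynomial.X ^ n := ⟨_, rfl⟩
      rw [pow_succ, ← mul_assoc]
      rw [← hψ] at ih ⊢
      have h2 : Polynomial.aeval θ (ψ * Polynomial.X) -
          C (Polynomial.aeval ρ (ψ * Polynomial.X)) =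
          θ * (Polynomial.aeval θ ψ - C (Polynomial.aeval ρ ψ)) +
            C (Polynomial.aeval ρ ψ) * (θ - C ρ) := by
        simp only [map_mul, Polynomial.aeval_X]
        ring
      rw [h2]
      have hθ1 : θ = 0 ∨ θ.intDegree < 1 := Or.inr (by omega)
      have hC1 : C (Polynomial.aeval ρ ψ) = 0 ∨ (C (Polynomial.aeval ρ ψ)).intDegree < 1 :=
        Or.inr (by rw [intDegree_C]; norm_num)
      exact eq_zero_or_intDegree_add_lt (by simpa using eq_zero_or_intDegree_mul_lt hθ1 ih)
        (by simpa using eq_zero_or_intDegree_mul_lt hC1 hρ)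
  have h2 : -(Polynomial.aeval θ φ - C (Polynomial.aeval ρ φ)) = 0 ∨
      (-(Polynomial.aeval θ φ - C (Polynomial.aeval ρ φ))).intDegree < 0 := by
    rw [neg_eq_zero, intDegree_neg]
    exact h1 φ
  have h3 := eq_zero_or_intDegree_add_lt hφ h2
  rw [neg_sub, add_sub_cancel, intDegree_C] at h3
  simpa using h3

/-- The degree function on rational functions over `L` with the derivations given by the
variable and by a derivation of `L`. -/
theorem exists_degreeField (hL : ∀ a : L, IsAlgebraic K a → ∃ κ, algebraMap K L κ = a)
    (δ : Derivation K L L) :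
    ∃ D : DegreeField K (RatFunc L), D.deg = intDegree ∧
      D.dx X = 0 ∧ (∀ a, D.dx (C a) = C (δ a)) ∧ D.dy X = 1 ∧ ∀ a, D.dy (C a) = 0 := by
  obtain ⟨d, hd⟩ := δ.exists_coeff_map
  obtain ⟨dx, hdx⟩ := d.exists_extend_fractionRing (F := RatFunc L)
  obtain ⟨dy, hdy⟩ := ((Polynomial.derivative' (R := L)).restrictScalars
    K).exists_extend_fractionRing (F := RatFunc L)
  refine ⟨{ deg := intDegree
            deg_mul := intDegree_mul
            add_lt := eq_zero_or_intDegree_add_lt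
            deg_algebraMap := fun {κ} _ => ?_
            exists_const := ?_
            dx := dx
            dy := dy
            jac_lt := ?_ }, rfl, ?_, ?_, ?_, ?_⟩
  · rw [IsScalarTower.algebraMap_apply K L (RatFunc L)]
    exact intDegree_C _
  · intro θ hθ h0 φ hφ0 hφ
    obtain ⟨ρ, hρ⟩ := exists_sub_C_intDegree_neg hθ h0
    obtain ⟨κ, rfl⟩ := hL ρ ⟨φ, hφ0, aeval_eq_zero_of_intDegree_neg h0 hρ hφ⟩
    refine ⟨κ, ?_⟩
    rw [IsScalarTower.algebraMap_apply K L (RatFunc L)]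
    exact hρ
  · have hx : ∀ {z : RatFunc L}, z ≠ 0 → dx z = 0 ∨ (dx z).intDegree < z.intDegree + 1 := by
      intro z hz
      have := eq_zero_or_intDegree_derivation_lt hdx (e := 0) (fun p => Or.inr ?_) hz
      · simpa using this
      · rw [add_zero]
        exact_mod_cast Polynomial.natDegree_le_iff_coeff_eq_zero.2 fun n hn => by
          rw [hd, Polynomial.coeff_eq_zero_of_natDegree_lt hn, map_zero]
    have hy : ∀ {z : RatFunc L}, z ≠ 0 → dy z = 0 ∨ (dy z).intDegree < z.intDegree := by
      intro z hz
      have := eq_zero_or_intDegree_derivation_lt hdy (e := 1) (fun p => ?_) hz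
      · simpa using this
      · change Polynomial.derivative p = 0 ∨ ((Polynomial.derivative p).natDegree : ℤ) + 1 ≤ _
        by_cases h : Polynomial.derivative p = 0
        · exact Or.inl h
        · right
          have h1 : p.natDegree ≠ 0 := fun h2 => h (Polynomial.derivative_of_natDegree_zero h2)
          have h2 := Polynomial.natDegree_derivative_lt h1
          omega
    intro a b ha hb
    rw [sub_eq_add_neg]
    refine eq_zero_or_intDegree_add_lt ?_ ?_
    · have := eq_zero_or_intDegree_mul_lt (hx ha) (hy hb)
      refine this.imp_right fun h => h.trans_le (by omega)
    · rw [neg_eq_zero, intDegree_neg]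
      have := eq_zero_or_intDegree_mul_lt (hy ha) (hx hb)
      refine this.imp_right fun h => h.trans_le (by omega)
  · change dx X = 0
    rw [← algebraMap_X, hdx]
    have : d Polynomial.X = 0 := by
      ext i
      rw [hd, Polynomial.coeff_X]
      split_ifs <;> simp
    rw [this, map_zero]
  · intro a
    change dx (C a) = _
    rw [← algebraMap_C, hdx, ← algebraMap_C]
    congr 1
    ext i
    rw [hd, Polynomial.coeff_C, Polynomial.coeff_C]
    split_ifs <;> simp
  · change dy X = 1
    rw [← algebraMap_X, hdy]
    change algebraMap _ _ (Polynomial.derivative Polynomial.X) = _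
    rw [Polynomial.derivative_X, map_one]
  · intro a
    change dy (C a) = 0
    rw [← algebraMap_C, hdy]
    change algebraMap _ _ (Polynomial.derivative (Polynomial.C a)) = _
    rw [Polynomial.derivative_C, map_zero]

end RatFunc

theorem MvPolynomial.totalDegree_polynomial_aeval {σ K : Type*} [Field K] (p : MvPolynomial σ K)
    (q : Polynomial K) :
    (Polynomial.aeval p q).totalDegree = q.natDegree * p.totalDegree := by
  rcases Nat.eq_zero_or_pos p.totalDegree with h | h
  · rw [totalDegree_eq_zero_iff_eq_C.1 h, ← algebraMap_eq, Polynomial.aeval_algebraMap_apply,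
      algebraMap_eq, totalDegree_C, totalDegree_C, mul_zero]
  obtain ⟨n, hn⟩ : ∃ n, n = q.natDegree := ⟨_, rfl⟩
  rw [← hn]
  induction n generalizing q with
  | zero =>
    rw [Polynomial.eq_C_of_natDegree_eq_zero hn.symm, Polynomial.aeval_C, algebraMap_eq,
      totalDegree_C, zero_mul]
  | succ n ih =>
    have h1 : q.divX.natDegree = n := by rw [Polynomial.natDegree_divX_eq_natDegree_tsub_one]; omega
    have h2 := ih q.divX h1.symm
    have h3 : Polynomial.aeval p q.divX ≠ 0 := by
      intro h0
      rw [h0, totalDegree_zero] at h2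
      have h4 : n = 0 := by
        rcases Nat.mul_eq_zero.1 h2.symm with h4 | h4 <;> omega
      rw [Polynomial.eq_C_of_natDegree_eq_zero (h1.trans h4), Polynomial.aeval_C,
        FaithfulSMul.algebraMap_eq_zero_iff] at h0
      have h5 : q.divX = 0 := by
        rw [Polynomial.eq_C_of_natDegree_eq_zero (h1.trans h4), h0, Polynomial.C_0]
      rw [Polynomial.divX_eq_zero_iff] at h5
      rw [h5, Polynomial.natDegree_C] at hn
      omega
    have hp : p ≠ 0 := by
      rintro rfl
      simp at h
    have h4 : (Polynomial.aeval p q.divX * p).totalDegree = (n + 1) * p.totalDegree := by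
      rw [totalDegree_mul_of_isDomain h3 hp, h2]
      ring
    conv_lhs => rw [← Polynomial.divX_mul_X_add q]
    rw [map_add, map_mul, Polynomial.aeval_X, Polynomial.aeval_C, algebraMap_eq,
      totalDegree_add_eq_left_of_totalDegree_lt, h4]
    rw [totalDegree_C, h4]
    positivity

namespace PlaneAut

variable {K : Type*} [Field K]

/-- The degree in the second variable. -/
noncomputable def degY (p : MvPolynomial (Fin 2) K) : ℕ :=
  ((Polynomial.Bivariate.equivMvPolynomial K).symm p).natDegree

/-- The embedding of `K[x,y]` into `K(x)(y)`. -/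
noncomputable def toRatFunc (K : Type*) [Field K] :
    MvPolynomial (Fin 2) K →ₐ[K] RatFunc (RatFunc K) :=
  aeval ![RatFunc.C RatFunc.X, RatFunc.X]

theorem toRatFunc_apply (p : MvPolynomial (Fin 2) K) :
    toRatFunc K p = algebraMap _ _ (Polynomial.map (algebraMap (Polynomial K) (RatFunc K))
      ((Polynomial.Bivariate.equivMvPolynomial K).symm p)) := by
  induction p using MvPolynomial.induction_on with
  | C a =>
    rw [toRatFunc, aeval_C, Polynomial.Bivariate.equivMvPolynomial_symm_C, Polynomial.map_C,
      RatFunc.algebraMap_C, RatFunc.algebraMap_C]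
    rfl
  | add p q hp hq => rw [map_add, map_add, Polynomial.map_add, map_add, hp, hq]
  | mul_X p n hp =>
    rw [map_mul, map_mul, Polynomial.map_mul, map_mul, hp]
    congr 1
    fin_cases n
    · simp [toRatFunc]
    · simp [toRatFunc]

theorem toRatFunc_injective : Function.Injective (toRatFunc K) := by
  intro p q h
  rw [toRatFunc_apply, toRatFunc_apply] at h
  exact (Polynomial.Bivariate.equivMvPolynomial K).symm.injective
    (Polynomial.map_injective _ (RatFunc.algebraMap_injective K) (RatFunc.algebraMap_injective _ h))

theorem intDegree_toRatFunc (p : MvPolynomial (Fin 2) K) :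
    (toRatFunc K p).intDegree = degY p := by
  rw [toRatFunc_apply, RatFunc.intDegree_polynomial,
    Polynomial.natDegree_map_eq_of_injective (RatFunc.algebraMap_injective K), degY]

theorem exists_degreeField (K : Type*) [Field K] :
    ∃ D : DegreeField K (RatFunc (RatFunc K)), D.deg = RatFunc.intDegree ∧
      (∀ p, D.dx (toRatFunc K p) = toRatFunc K (pderiv 0 p)) ∧
      ∀ p, D.dy (toRatFunc K p) = toRatFunc K (pderiv 1 p) := by
  obtain ⟨δ, hδ⟩ := ((Polynomial.derivative' (R := K))).exists_extend_fractionRing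
    (F := RatFunc K)
  have hδX : δ RatFunc.X = 1 := by
    rw [← RatFunc.algebraMap_X, hδ]
    change algebraMap _ _ (Polynomial.derivative Polynomial.X) = _
    rw [Polynomial.derivative_X, map_one]
  obtain ⟨D, hdeg, hxX, hxC, hyX, hyC⟩ := RatFunc.exists_degreeField (K := K) (L := RatFunc K)
    (fun a ha => by
      by_contra hc
      push Not at hc
      exact RatFunc.transcendental_of_ne_C a (fun ⟨c, h⟩ => hc c h.symm) ha) δ
  have key : ∀ (d : Derivation K (RatFunc (RatFunc K)) (RatFunc (RatFunc K))) (i : Fin 2),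
      (∀ j, d (toRatFunc K (X j)) = toRatFunc K (pderiv i (X j))) →
      ∀ p, d (toRatFunc K p) = toRatFunc K (pderiv i p) := by
    intro d i h p
    induction p using MvPolynomial.induction_on with
    | C a => rw [← algebraMap_eq, AlgHom.commutes, Derivation.map_algebraMap,
        Derivation.map_algebraMap, map_zero]
    | add p q hp hq => rw [map_add, map_add, map_add, map_add, hp, hq]
    | mul_X p j hp =>
      rw [map_mul, Derivation.leibniz, Derivation.leibniz, map_add, hp, h, smul_eq_mul,
        smul_eq_mul, smul_eq_mul, smul_eq_mul, map_mul, map_mul]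
  refine ⟨D, hdeg, key D.dx 0 fun j => ?_, key D.dy 1 fun j => ?_⟩
  · fin_cases j
    · simp [toRatFunc, hxC, hδX]
    · simp [toRatFunc, hxX]
  · fin_cases j
    · simp [toRatFunc, hyC]
    · simp [toRatFunc, hyX]

theorem isUnit_jacobian (φ : MvPolynomial (Fin 2) K ≃ₐ[K] MvPolynomial (Fin 2) K) :
    IsUnit (pderiv 0 (φ (X 0)) * pderiv 1 (φ (X 1)) - pderiv 1 (φ (X 0)) * pderiv 0 (φ (X 1))) := by
  obtain ⟨J, hJ⟩ : ∃ J, J = pderiv 0 (φ (X 0)) * pderiv 1 (φ (X 1)) -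
    pderiv 1 (φ (X 0)) * pderiv 0 (φ (X 1)) := ⟨_, rfl⟩
  rw [← hJ]
  have key : ∀ b, (∀ j, J ∣ pderiv 0 (φ (X j)) * pderiv 1 b - pderiv 1 (φ (X j)) * pderiv 0 b) →
      ∀ a, J ∣ pderiv 0 a * pderiv 1 b - pderiv 1 a * pderiv 0 b := by
    intro b hb a
    obtain ⟨p, rfl⟩ := φ.surjective a
    induction p using MvPolynomial.induction_on with
    | C c => rw [← algebraMap_eq, AlgEquiv.commutes, algebraMap_eq]; simp
    | add p q hp hq =>
      convert dvd_add hp hq using 1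
      simp only [map_add]
      ring
    | mul_X p j hp =>
      convert dvd_add (Dvd.dvd.mul_left (hb j) (φ p)) (Dvd.dvd.mul_left hp (φ (X j))) using 1
      simp only [map_mul, Derivation.leibniz, smul_eq_mul]
      ring
  have h1 : ∀ j a, J ∣ pderiv 0 a * pderiv 1 (φ (X j)) - pderiv 1 a * pderiv 0 (φ (X j)) := by
    intro j
    refine key _ fun i => ?_
    fin_cases i <;> fin_cases j
    · convert dvd_zero J using 1
      ring
    · rw [hJ]
      exact dvd_rfl
    · rw [hJ]
      refine Dvd.intro (-1) ?_
      change _ = pderiv 0 (φ (X 1)) * pderiv 1 (φ (X 0)) - pderiv 1 (φ (X 1)) * pderiv 0 (φ (X 0))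
      ring
    · convert dvd_zero J using 1
      ring
  have h2 := key (X 1) (fun j => by
    have := (h1 j (X 1)).neg_right
    convert this using 1
    ring) (X 0)
  refine isUnit_of_dvd_one ?_
  convert h2 using 1
  simp [pderiv_X]

theorem degY_eq_zero_of_isUnit {p : MvPolynomial (Fin 2) K} (h : IsUnit p) : degY p = 0 :=
  Polynomial.natDegree_eq_zero_of_isUnit
    (h.map (Polynomial.Bivariate.equivMvPolynomial K).symm)

/-- If both components of an automorphism involve the second variable, then the degree in this
variable of one of them can be lowered by subtracting a monomial in the other one. -/
theorem exists_degY_lt (φ : MvPolynomial (Fin 2) K ≃ₐ[K] MvPolynomial (Fin 2) K)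
    (h0 : 0 < degY (φ (X 0))) (h1 : 0 < degY (φ (X 1))) :
    (∃ (κ : K) (k : ℕ), degY (φ (X 0) - C κ * φ (X 1) ^ k) < degY (φ (X 0))) ∨
    (∃ (κ : K) (k : ℕ), degY (φ (X 1) - C κ * φ (X 0) ^ k) < degY (φ (X 1))) := by
  obtain ⟨D, hdeg, hdx, hdy⟩ := exists_degreeField K
  have hd : ∀ p, D.deg (toRatFunc K p) = degY p := fun p => by rw [hdeg, intDegree_toRatFunc]
  have hne : ∀ j, toRatFunc K (φ (X j)) ≠ 0 := fun j => by
    rw [Ne, map_eq_zero_iff _ toRatFunc_injective, map_eq_zero_iff _ φ.injective]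
    exact X_ne_zero j
  have hlt : ∀ {p : MvPolynomial (Fin 2) K} {n : ℕ}, 0 < n → D.Lt (toRatFunc K p) n →
      degY p < n := by
    intro p n hn h
    rcases h with h | h
    · rw [map_eq_zero_iff _ toRatFunc_injective] at h
      rw [h, degY, map_zero, Polynomial.natDegree_zero]
      exact hn
    · rw [hd] at h
      exact_mod_cast h
  have hjac : D.jac (toRatFunc K (φ (X 0))) (toRatFunc K (φ (X 1))) = toRatFunc K
      (pderiv 0 (φ (X 0)) * pderiv 1 (φ (X 1)) - pderiv 1 (φ (X 0)) * pderiv 0 (φ (X 1))) := by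
    rw [DegreeField.jac, hdx, hdy, hdx, hdy, map_sub, map_mul, map_mul]
  have hJ := isUnit_jacobian φ
  let e : (Fin 2 →₀ ℕ) ≃ ℕ × ℕ := Finsupp.equivFunOnFinite.trans (finTwoArrowEquiv ℕ)
  obtain ⟨P, hP⟩ := φ.surjective (X 0)
  have hsum : ∑ x ∈ P.support.map e.toEmbedding, algebraMap K (RatFunc (RatFunc K))
      (P.coeff (e.symm x)) * (toRatFunc K (φ (X 0)) ^ x.1 * toRatFunc K (φ (X 1)) ^ x.2) =
      (RatFunc.C RatFunc.X : RatFunc (RatFunc K)) := by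
    rw [Finset.sum_map]
    have h2 : toRatFunc K (φ P) = (RatFunc.C RatFunc.X : RatFunc (RatFunc K)) := by
      rw [hP, toRatFunc, aeval_X]
      rfl
    rw [← h2]
    have h3 : ((toRatFunc K).comp φ.toAlgHom) = aeval fun j => toRatFunc K (φ (X j)) := by
      refine algHom_ext fun j => ?_
      rw [aeval_X]
      rfl
    have h4 : toRatFunc K (φ P) = ((toRatFunc K).comp φ.toAlgHom) P := rfl
    rw [h4, h3, aeval_def, eval₂_eq']
    refine Finset.sum_congr rfl fun s _ => ?_
    simp only [Equiv.coe_toEmbedding, Equiv.symm_apply_apply, Fin.prod_univ_two]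
    rfl
  have hcase := DegreeField.exists_reduction (D := D) (hne 0) (hne 1)
    (by rw [hd]; exact_mod_cast h0) (by rw [hd]; exact_mod_cast h1)
    (by
      rw [hjac, Ne, map_eq_zero_iff _ toRatFunc_injective]
      exact hJ.ne_zero)
    (by rw [hjac, hd, degY_eq_zero_of_isUnit hJ]; rfl)
    (P.support.map e.toEmbedding) (fun x => P.coeff (e.symm x))
    (by
      intro x hx
      obtain ⟨s, hs, rfl⟩ := Finset.mem_map.1 hx
      simpa using hs)
    (by
      by_contra hcon
      push Not at hcon
      have h2 : P = C (P.coeff 0) := by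
        ext s
        rw [coeff_C]
        split_ifs with hs
        · rw [hs]
        · by_contra h3
          have h4 := hcon (e s) (Finset.mem_map_of_mem _ (mem_support_iff.2 h3))
          refine hs (e.injective ?_)
          rw [h4]
          rfl
      rw [h2, ← algebraMap_eq, AlgEquiv.commutes, algebraMap_eq] at hP
      have h3 := congrArg totalDegree hP
      rw [totalDegree_C, totalDegree_X] at h3
      omega)
    (by
      rw [hsum, DegreeField.Lt, hdeg, RatFunc.intDegree_C]
      exact Or.inr one_pos)
  have hmap : ∀ (p q : MvPolynomial (Fin 2) K) (κ : K) (k : ℕ),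
      toRatFunc K p - algebraMap K (RatFunc (RatFunc K)) κ * toRatFunc K q ^ k =
        toRatFunc K (p - C κ * q ^ k) := by
    intro p q κ k
    rw [map_sub, map_mul, map_pow, ← algebraMap_eq, AlgHom.commutes]
  refine hcase.imp ?_ ?_
  · rintro ⟨κ, k, h⟩
    rw [hmap, hd] at h
    exact ⟨κ, k, hlt h0 h⟩
  · rintro ⟨κ, k, h⟩
    rw [hmap, hd] at h
    exact ⟨κ, k, hlt h1 h⟩

theorem algHom_ext_fin_two {R A : Type*} [CommRing R] [CommRing A] [Algebra R A]
    {f g : MvPolynomial (Fin 2) R →ₐ[R] A} (h0 : f (X 0) = g (X 0)) (h1 : f (X 1) = g (X 1)) :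
    f = g :=
  algHom_ext (Fin.forall_fin_two.2 ⟨h0, h1⟩)

theorem alphaHom_X0 (a : K) : alphaHom a (X 0) = X 1 := by simp [alphaHom]

theorem alphaHom_X1 (a : K) : alphaHom a (X 1) = X 0 + C a * X 1 := by simp [alphaHom]

theorem betaHom_X0 (h : Polynomial K) : betaHom h (X 0) = X 0 + Polynomial.aeval (X 1) h := by
  simp [betaHom]

theorem betaHom_X1 (h : Polynomial K) : betaHom h (X 1) = X 1 := by simp [betaHom]

theorem lamOf_X0 (t : Aff K) :
    lamOf t (X 0) = C t.1.1.1 * X 0 + C t.1.1.2.1 * X 1 + C t.1.1.2.2 := by simp [lamOf]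

theorem lamOf_X1 (t : Aff K) :
    lamOf t (X 1) = C t.1.2.1 * X 0 + C t.1.2.2.1 * X 1 + C t.1.2.2.2 := by simp [lamOf]

/-- The affine data with given coefficients. -/
def mkAff (a₁ b₁ c₁ a₂ b₂ c₂ : K) (h : a₁ * b₂ ≠ a₂ * b₁) : Aff K :=
  ⟨((a₁, b₁, c₁), (a₂, b₂, c₂)), h⟩

theorem lamOf_mkAff_X0 {a₁ b₁ c₁ a₂ b₂ c₂ : K} (h : a₁ * b₂ ≠ a₂ * b₁) :
    lamOf (mkAff a₁ b₁ c₁ a₂ b₂ c₂ h) (X 0) = C a₁ * X 0 + C b₁ * X 1 + C c₁ :=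
  lamOf_X0 _

theorem lamOf_mkAff_X1 {a₁ b₁ c₁ a₂ b₂ c₂ : K} (h : a₁ * b₂ ≠ a₂ * b₁) :
    lamOf (mkAff a₁ b₁ c₁ a₂ b₂ c₂ h) (X 1) = C a₂ * X 0 + C b₂ * X 1 + C c₂ :=
  lamOf_X1 _

theorem exists_eq_mkAff (t : Aff K) :
    ∃ (a₁ b₁ c₁ a₂ b₂ c₂ : K) (h : a₁ * b₂ ≠ a₂ * b₁), t = mkAff a₁ b₁ c₁ a₂ b₂ c₂ h :=
  ⟨_, _, _, _, _, _, t.2, rfl⟩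

theorem algHom_C {A : Type*} [CommRing A] [Algebra K A] {σ : Type*}
    (f : MvPolynomial σ K →ₐ[K] A) (a : K) : f (C a) = algebraMap K A a := by
  rw [← algebraMap_eq, AlgHom.commutes]

theorem algHom_aeval {A B : Type*} [CommRing A] [Algebra K A] [CommRing B] [Algebra K B]
    (f : A →ₐ[K] B) (a : A) (h : Polynomial K) :
    f (Polynomial.aeval a h) = Polynomial.aeval (f a) h :=
  (Polynomial.aeval_algHom_apply f a h).symm

theorem betaHom_comp_betaHom (h k : Polynomial K) :
    (betaHom h).comp (betaHom k) = betaHom (h + k) := by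
  refine algHom_ext_fin_two ?_ ?_
  · simp only [AlgHom.comp_apply, betaHom_X0, betaHom_X1, map_add, algHom_aeval]
    ring
  · simp only [AlgHom.comp_apply, betaHom_X1]

theorem betaHom_zero : betaHom (0 : Polynomial K) = AlgHom.id K _ := by
  refine algHom_ext_fin_two ?_ ?_
  · simp [betaHom_X0]
  · simp [betaHom_X1]

/-- The shear `(x + h(y), y)` as an automorphism. -/
noncomputable def betaEquiv (h : Polynomial K) :
    MvPolynomial (Fin 2) K ≃ₐ[K] MvPolynomial (Fin 2) K :=
  AlgEquiv.ofAlgHom (betaHom h) (betaHom (-h))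
    (by rw [betaHom_comp_betaHom, add_neg_cancel, betaHom_zero])
    (by rw [betaHom_comp_betaHom, neg_add_cancel, betaHom_zero])

/-- The coordinate swap. -/
def swapAff (K : Type*) [Field K] : Aff K :=
  mkAff 0 1 0 1 0 0 (by simp)

/-- The affine maps acting on the first variable only. -/
def lineAff (a b : K) (ha : a ≠ 0) : Aff K :=
  mkAff a 0 b 0 1 0 (by simpa using ha)

theorem lamOf_swap_X0 : lamOf (swapAff K) (X 0) = X 1 := by
  simp [swapAff, lamOf_mkAff_X0]

theorem lamOf_swap_X1 : lamOf (swapAff K) (X 1) = X 0 := by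
  simp [swapAff, lamOf_mkAff_X1]

theorem lamOf_line_X0 (a b : K) (ha : a ≠ 0) : lamOf (lineAff a b ha) (X 0) = C a * X 0 + C b := by
  simp [lineAff, lamOf_mkAff_X0]

theorem lamOf_line_X1 (a b : K) (ha : a ≠ 0) : lamOf (lineAff a b ha) (X 1) = X 1 := by
  simp [lineAff, lamOf_mkAff_X1]

theorem lamOf_swap_comp : (lamOf (swapAff K)).comp (lamOf (swapAff K)) = AlgHom.id K _ :=
  algHom_ext_fin_two (by simp [lamOf_swap_X0, lamOf_swap_X1]) (by simp [lamOf_swap_X0, lamOf_swap_X1])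

theorem lamOf_line_comp {a b a' b' : K} (ha : a ≠ 0) (ha' : a' ≠ 0) (h1 : a' * a = 1)
    (h2 : a' * b + b' = 0) :
    (lamOf (lineAff a b ha)).comp (lamOf (lineAff a' b' ha')) = AlgHom.id K _ := by
  refine algHom_ext_fin_two ?_ ?_
  · simp only [AlgHom.comp_apply, lamOf_line_X0, map_add, map_mul, algHom_C, algebraMap_eq,
      AlgHom.id_apply]
    have h3 : C a' * C a = (1 : MvPolynomial (Fin 2) K) := by rw [← C_mul, h1, C_1]
    have h4 : C a' * C b + C b' = (0 : MvPolynomial (Fin 2) K) := by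
      rw [← C_mul, ← C_add, h2, C_0]
    linear_combination X 0 * h3 + h4
  · simp [lamOf_line_X1]

/-- The coordinate swap as an automorphism. -/
noncomputable def swapEquiv (K : Type*) [Field K] :
    MvPolynomial (Fin 2) K ≃ₐ[K] MvPolynomial (Fin 2) K :=
  AlgEquiv.ofAlgHom (lamOf (swapAff K)) (lamOf (swapAff K)) lamOf_swap_comp lamOf_swap_comp

/-- An affine map of the first variable as an automorphism. -/
noncomputable def lineEquiv (a b : K) (ha : a ≠ 0) :
    MvPolynomial (Fin 2) K ≃ₐ[K] MvPolynomial (Fin 2) K :=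
  AlgEquiv.ofAlgHom (lamOf (lineAff a b ha)) (lamOf (lineAff a⁻¹ (-(a⁻¹ * b)) (inv_ne_zero ha)))
    (lamOf_line_comp _ _ (inv_mul_cancel₀ ha) (by ring))
    (lamOf_line_comp _ _ (mul_inv_cancel₀ ha) (by field_simp; ring))

/-- A fibre-preserving automorphism over `K[x]` is triangular. -/
theorem exists_triangular_of_map_X0 (φ : MvPolynomial (Fin 2) K ≃ₐ[K] MvPolynomial (Fin 2) K)
    (h0 : φ (X 0) = X 0) :
    ∃ (u : K) (γ : Polynomial K), u ≠ 0 ∧ φ (X 1) = C u * X 1 + Polynomial.aeval (X 0) γ := by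
  let e := (Polynomial.Bivariate.equivMvPolynomial K).symm
  have hcomp : ∀ p, e (φ p) = (e p).comp (e (φ (X 1))) := by
    intro p
    induction p using MvPolynomial.induction_on with
    | C a =>
      rw [← algebraMap_eq, AlgEquiv.commutes, algebraMap_eq]
      simp [e]
    | add p q hp hq => rw [map_add, map_add, map_add, Polynomial.add_comp, hp, hq]
    | mul_X p j hp =>
      rw [map_mul, map_mul, map_mul, Polynomial.mul_comp, hp]
      congr 1
      fin_cases j
      · change e (φ (X 0)) = (e (X 0)).comp _
        rw [h0]
        simp [e]
      · change e (φ (X 1)) = (e (X 1)).comp _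
        simp [e]
  have h1 : (e (φ.symm (X 1))).comp (e (φ (X 1))) = Polynomial.X := by
    rw [← hcomp, AlgEquiv.apply_symm_apply]
    simp [e]
  have h2 := congrArg Polynomial.natDegree h1
  rw [Polynomial.natDegree_comp, Polynomial.natDegree_X] at h2
  have h3 : (e (φ (X 1))).natDegree = 1 := Nat.eq_one_of_mul_eq_one_left h2
  have h4 := congrArg Polynomial.leadingCoeff h1
  rw [Polynomial.leadingCoeff_comp (by omega), Polynomial.leadingCoeff_X,
    Nat.eq_one_of_mul_eq_one_right h2, pow_one] at h4
  have h5 : IsUnit (e (φ (X 1))).leadingCoeff := IsUnit.of_mul_eq_one_right _ h4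
  obtain ⟨u, hu, hu'⟩ := Polynomial.isUnit_iff.1 h5
  refine ⟨u, (e (φ (X 1))).coeff 0, hu.ne_zero, ?_⟩
  have h6 := Polynomial.eq_X_add_C_of_natDegree_le_one h3.le
  rw [Polynomial.leadingCoeff, h3] at hu'
  rw [← hu'] at h6
  apply e.injective
  rw [map_add, map_mul]
  have h7 : e (Polynomial.aeval (X 0) ((e (φ (X 1))).coeff 0)) =
      Polynomial.C ((e (φ (X 1))).coeff 0) := by
    rw [← Polynomial.aeval_algHom_apply]
    have h8 : e (X 0) = Polynomial.C Polynomial.X := by simp [e]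
    rw [h8]
    change Polynomial.aeval (algebraMap (Polynomial K) (Polynomial (Polynomial K)) Polynomial.X) _ = _
    rw [Polynomial.aeval_algebraMap_apply, Polynomial.aeval_X_left_apply]
    rfl
  rw [h7]
  conv_lhs => rw [h6]
  simp [e]

theorem exists_linear_of_degY_eq_zero
    (φ : MvPolynomial (Fin 2) K ≃ₐ[K] MvPolynomial (Fin 2) K) (h0 : degY (φ (X 0)) = 0) :
    ∃ a b : K, a ≠ 0 ∧ φ (X 0) = C a * X 0 + C b := by
  obtain ⟨q, hq⟩ : ∃ q : Polynomial K, φ (X 0) = Polynomial.aeval (X 0) q := by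
    refine ⟨((Polynomial.Bivariate.equivMvPolynomial K).symm (φ (X 0))).coeff 0, ?_⟩
    have h1 := Polynomial.eq_C_of_natDegree_eq_zero h0
    have h2 : Polynomial.Bivariate.equivMvPolynomial K (Polynomial.C
        (((Polynomial.Bivariate.equivMvPolynomial K).symm (φ (X 0))).coeff 0)) = φ (X 0) := by
      rw [← h1, AlgEquiv.apply_symm_apply]
    refine h2.symm.trans ?_
    generalize ((Polynomial.Bivariate.equivMvPolynomial K).symm (φ (X 0))).coeff 0 = r
    induction r using Polynomial.induction_on' with
    | add p q hp hq => rw [Polynomial.C_add, map_add, map_add, hp, hq]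
    | monomial n a =>
      rw [← Polynomial.C_mul_X_pow_eq_monomial, Polynomial.C_mul, map_mul, Polynomial.C_pow,
        map_pow, Polynomial.Bivariate.equivMvPolynomial_C_C,
        Polynomial.Bivariate.equivMvPolynomial_C_X, map_mul, map_pow, Polynomial.aeval_X,
        Polynomial.aeval_C, algebraMap_eq]
  have h1 : X 0 = Polynomial.aeval (φ.symm (X 0)) q := by
    rw [Polynomial.aeval_algHom_apply, ← hq, AlgEquiv.symm_apply_apply]
  have h2 := congrArg totalDegree h1
  rw [totalDegree_polynomial_aeval, totalDegree_X] at h2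
  have h3 : q.natDegree = 1 := Nat.eq_one_of_mul_eq_one_right h2.symm
  have h4 := Polynomial.eq_X_add_C_of_natDegree_le_one h3.le
  refine ⟨q.coeff 1, q.coeff 0, ?_, ?_⟩
  · intro h5
    have : q ≠ 0 := by
      rintro rfl
      simp at h3
    exact Polynomial.leadingCoeff_ne_zero.2 this (by rw [Polynomial.leadingCoeff, h3, h5])
  · rw [hq]
    conv_lhs => rw [h4]
    simp

/-- The automorphisms of the plane are generated by affine maps and shears. -/
theorem induction_on_aut {S : (MvPolynomial (Fin 2) K →ₐ[K] MvPolynomial (Fin 2) K) → Prop}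
    (hid : S (AlgHom.id K _)) (haff : ∀ φ t, S φ → S (φ.comp (lamOf t)))
    (hshear : ∀ φ h, S φ → S (φ.comp (betaHom h)))
    (φ : MvPolynomial (Fin 2) K ≃ₐ[K] MvPolynomial (Fin 2) K) : S φ.toAlgHom := by
  have hswap : ∀ φ : MvPolynomial (Fin 2) K ≃ₐ[K] MvPolynomial (Fin 2) K,
      S ((swapEquiv K).trans φ).toAlgHom → S φ.toAlgHom := by
    intro φ h
    have h1 := haff _ (swapAff K) h
    convert h1 using 1
    change _ = (φ.toAlgHom.comp (lamOf (swapAff K))).comp (lamOf (swapAff K))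
    rw [AlgHom.comp_assoc, lamOf_swap_comp, AlgHom.comp_id]
  have hbeta : ∀ (φ : MvPolynomial (Fin 2) K ≃ₐ[K] MvPolynomial (Fin 2) K) h,
      S ((betaEquiv h).trans φ).toAlgHom → S φ.toAlgHom := by
    intro φ h hS
    have h1 := hshear _ (-h) hS
    convert h1 using 1
    change _ = (φ.toAlgHom.comp (betaHom h)).comp (betaHom (-h))
    rw [AlgHom.comp_assoc, betaHom_comp_betaHom, add_neg_cancel, betaHom_zero, AlgHom.comp_id]
  have hline : ∀ (φ : MvPolynomial (Fin 2) K ≃ₐ[K] MvPolynomial (Fin 2) K) a b ha,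
      S ((lineEquiv a b ha).trans φ).toAlgHom → S φ.toAlgHom := by
    intro φ a b ha hS
    have h1 := haff _ (lineAff a⁻¹ (-(a⁻¹ * b)) (inv_ne_zero ha)) hS
    convert h1 using 1
    change _ = (φ.toAlgHom.comp (lamOf (lineAff a b ha))).comp (lamOf _)
    rw [AlgHom.comp_assoc, lamOf_line_comp _ _ (inv_mul_cancel₀ ha) (by ring), AlgHom.comp_id]
  have hbase : ∀ φ : MvPolynomial (Fin 2) K ≃ₐ[K] MvPolynomial (Fin 2) K,
      degY (φ (X 0)) = 0 → S φ.toAlgHom := by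
    intro φ h0
    obtain ⟨a, b, ha, hab⟩ := exists_linear_of_degY_eq_zero φ h0
    refine hline φ a⁻¹ (-(a⁻¹ * b)) (inv_ne_zero ha) ?_
    generalize hψ : (lineEquiv a⁻¹ (-(a⁻¹ * b)) (inv_ne_zero ha)).trans φ = ψ
    have h1 : ψ (X 0) = X 0 := by
      rw [← hψ]
      change φ (lamOf _ (X 0)) = _
      rw [lamOf_line_X0, map_add, map_mul, hab, ← algebraMap_eq, AlgEquiv.commutes,
        AlgEquiv.commutes, algebraMap_eq]
      have h3 : C a⁻¹ * C a = (1 : MvPolynomial (Fin 2) K) := by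
        rw [← C_mul, inv_mul_cancel₀ ha, C_1]
      have h4 : C a⁻¹ * C b + C (-(a⁻¹ * b)) = (0 : MvPolynomial (Fin 2) K) := by
        rw [← C_mul, ← C_add, add_neg_cancel, C_0]
      linear_combination X 0 * h3 + h4
    obtain ⟨u, γ, hu, hγ⟩ := exists_triangular_of_map_X0 ψ h1
    refine hswap _ (hbeta _ (-γ) ?_)
    have h2 := haff _ (mkAff 0 u 0 1 0 0 (by simpa using hu.symm)) hid
    convert h2 using 1
    refine algHom_ext_fin_two ?_ ?_
    · change ψ (lamOf (swapAff K) (betaHom (-γ) (X 0))) = lamOf _ (X 0)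
      rw [betaHom_X0, map_add, lamOf_swap_X0, algHom_aeval, lamOf_swap_X1, map_add, hγ,
        lamOf_mkAff_X0, ← AlgEquiv.coe_toAlgHom, algHom_aeval, AlgEquiv.coe_toAlgHom, h1]
      simp
    · change ψ (lamOf (swapAff K) (betaHom (-γ) (X 1))) = lamOf _ (X 1)
      rw [betaHom_X1, lamOf_swap_X1, h1, lamOf_mkAff_X1]
      simp
  obtain ⟨n, hn⟩ : ∃ n, n = degY (φ (X 0)) + degY (φ (X 1)) := ⟨_, rfl⟩
  induction n using Nat.strong_induction_on generalizing φ with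
  | _ n ih =>
    have hshift : ∀ (φ : MvPolynomial (Fin 2) K ≃ₐ[K] MvPolynomial (Fin 2) K) (κ : K) (k : ℕ),
        n = degY (φ (X 0)) + degY (φ (X 1)) →
        degY (φ (X 0) - C κ * φ (X 1) ^ k) < degY (φ (X 0)) → S φ.toAlgHom := by
      intro φ κ k hn hlt
      refine hbeta φ (-(Polynomial.C κ * Polynomial.X ^ k)) (ih _ ?_ _ rfl)
      have h1 : ((betaEquiv (-(Polynomial.C κ * Polynomial.X ^ k))).trans φ) (X 0) =
          φ (X 0) - C κ * φ (X 1) ^ k := by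
        change φ (betaHom _ (X 0)) = _
        rw [betaHom_X0, map_neg, map_mul, map_pow, Polynomial.aeval_X, Polynomial.aeval_C,
          map_add, map_neg, map_mul, map_pow, AlgEquiv.commutes, algebraMap_eq, sub_eq_add_neg]
      have h2 : ((betaEquiv (-(Polynomial.C κ * Polynomial.X ^ k))).trans φ) (X 1) = φ (X 1) := by
        change φ (betaHom _ (X 1)) = _
        rw [betaHom_X1]
      rw [h1, h2]
      omega
    have hs0 : ((swapEquiv K).trans φ) (X 0) = φ (X 1) := by
      change φ (lamOf _ (X 0)) = _
      rw [lamOf_swap_X0]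
    have hs1 : ((swapEquiv K).trans φ) (X 1) = φ (X 0) := by
      change φ (lamOf _ (X 1)) = _
      rw [lamOf_swap_X1]
    rcases Nat.eq_zero_or_pos (degY (φ (X 0))) with h0 | h0
    · exact hbase φ h0
    rcases Nat.eq_zero_or_pos (degY (φ (X 1))) with h1 | h1
    · exact hswap φ (hbase _ (by rw [hs0, h1]))
    rcases exists_degY_lt φ h0 h1 with ⟨κ, k, h⟩ | ⟨κ, k, h⟩
    · exact hshift φ κ k hn h
    · refine hswap φ (hshift _ κ k ?_ ?_)
      · rw [hs0, hs1, hn, add_comm]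
      · rwa [hs0, hs1]

theorem exists_lamOf_comp_lamOf (t t' : Aff K) :
    ∃ t'' : Aff K, (lamOf t).comp (lamOf t') = lamOf t'' := by
  obtain ⟨a₁, b₁, c₁, a₂, b₂, c₂, h, rfl⟩ := exists_eq_mkAff t
  obtain ⟨a₁', b₁', c₁', a₂', b₂', c₂', h', rfl⟩ := exists_eq_mkAff t'
  refine ⟨mkAff (a₁' * a₁ + b₁' * a₂) (a₁' * b₁ + b₁' * b₂) (a₁' * c₁ + b₁' * c₂ + c₁')
    (a₂' * a₁ + b₂' * a₂) (a₂' * b₁ + b₂' * b₂) (a₂' * c₁ + b₂' * c₂ + c₂') ?_, ?_⟩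
  · have h1 := mul_ne_zero (sub_ne_zero.2 h) (sub_ne_zero.2 h')
    refine sub_ne_zero.1 fun h2 => h1 ?_
    linear_combination h2
  · refine algHom_ext_fin_two ?_ ?_
    · simp only [AlgHom.comp_apply, lamOf_mkAff_X0, lamOf_mkAff_X1, map_add, map_mul, algHom_C,
        algebraMap_eq]
      ring
    · simp only [AlgHom.comp_apply, lamOf_mkAff_X0, lamOf_mkAff_X1, map_add, map_mul, algHom_C,
        algebraMap_eq]
      ring

theorem id_eq_lamOf :
    AlgHom.id K (MvPolynomial (Fin 2) K) = lamOf (mkAff 1 0 0 0 1 0 (by simp)) :=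
  algHom_ext_fin_two (by simp [lamOf_mkAff_X0]) (by simp [lamOf_mkAff_X1])

theorem alphaHom_eq_lamOf (a : K) : alphaHom a = lamOf (mkAff 0 1 0 1 a 0 (by simp)) :=
  algHom_ext_fin_two (by simp [lamOf_mkAff_X0, alphaHom_X0])
    (by simp [lamOf_mkAff_X1, alphaHom_X1])

/-- The composition `α₂∘β₂∘⋯∘α_k∘β_k∘f`. -/
noncomputable def restHom (rest : List (K × H K))
    (f : MvPolynomial (Fin 2) K →ₐ[K] MvPolynomial (Fin 2) K) :
    MvPolynomial (Fin 2) K →ₐ[K] MvPolynomial (Fin 2) K :=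
  rest.foldr (fun p acc => (alphaHom p.1).comp ((betaHom p.2.1).comp acc)) f

theorem restHom_nil (f : MvPolynomial (Fin 2) K →ₐ[K] MvPolynomial (Fin 2) K) :
    restHom [] f = f := rfl

theorem restHom_cons (p : K × H K) (rest : List (K × H K))
    (f : MvPolynomial (Fin 2) K →ₐ[K] MvPolynomial (Fin 2) K) :
    restHom (p :: rest) f = (alphaHom p.1).comp ((betaHom p.2.1).comp (restHom rest f)) := rfl

theorem restHom_comp (rest : List (K × H K))
    (f g : MvPolynomial (Fin 2) K →ₐ[K] MvPolynomial (Fin 2) K) :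
    restHom rest (f.comp g) = (restHom rest f).comp g := by
  induction rest with
  | nil => rfl
  | cons p rest ih =>
    rw [restHom_cons, ih, restHom_cons, AlgHom.comp_assoc, AlgHom.comp_assoc]

theorem restHom_concat (rest : List (K × H K)) (a : K) (k : H K) :
    restHom (rest ++ [(a, k)]) (AlgHom.id K _) =
      (restHom rest (AlgHom.id K _)).comp ((alphaHom a).comp (betaHom k.1)) := by
  rw [← restHom_comp, AlgHom.id_comp]
  induction rest with
  | nil => rw [List.nil_append, restHom_cons, restHom_nil, restHom_nil, AlgHom.comp_id]
  | cons p rest ih => rw [List.cons_append, restHom_cons, ih, restHom_cons]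

/-- The composition `α₁∘β₁∘⋯∘α_k∘β_k`. -/
noncomputable def reducedHom : Option (Option K × H K × List (K × H K)) →
    (MvPolynomial (Fin 2) K →ₐ[K] MvPolynomial (Fin 2) K)
  | none => AlgHom.id K _
  | some (oa, h, rest) => (alphaOpt oa).comp ((betaHom h.1).comp (restHom rest (AlgHom.id K _)))

theorem reducedHom_none :
    reducedHom (none : Option (Option K × H K × List (K × H K))) = AlgHom.id K _ := rfl

theorem reducedHom_some (oa : Option K) (h : H K) (rest : List (K × H K)) :
    reducedHom (some (oa, h, rest)) =
      (alphaOpt oa).comp ((betaHom h.1).comp (restHom rest (AlgHom.id K _))) := rfl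

theorem reducedHom_some_nil (oa : Option K) (h : H K) :
    reducedHom (some (oa, h, [])) = (alphaOpt oa).comp (betaHom h.1) := by
  rw [reducedHom_some, restHom_nil, AlgHom.comp_id]

theorem wordHom_some (oa : Option K) (h : H K) (rest : List (K × H K)) (t : Aff K) :
    wordHom (some (oa, h, rest), t) =
      (alphaOpt oa).comp ((betaHom h.1).comp (restHom rest (lamOf t))) := rfl

theorem wordHom_mk (w : Option (Option K × H K × List (K × H K))) (t : Aff K) :
    wordHom (w, t) = (reducedHom w).comp (lamOf t) := by
  match w with
  | none => exact (AlgHom.id_comp _).symm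
  | some (oa, h, rest) =>
    rw [reducedHom_some, AlgHom.comp_assoc, AlgHom.comp_assoc, ← restHom_comp, AlgHom.id_comp,
      wordHom_some]

theorem reducedHom_concat (oa : Option K) (h : H K) (rest : List (K × H K)) (a : K) (k : H K) :
    reducedHom (some (oa, h, rest ++ [(a, k)])) =
      (reducedHom (some (oa, h, rest))).comp ((alphaHom a).comp (betaHom k.1)) := by
  rw [reducedHom_some, restHom_concat, reducedHom_some, AlgHom.comp_assoc, AlgHom.comp_assoc]

theorem alphaOpt_none : alphaOpt (none : Option K) = AlgHom.id K _ := rfl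

theorem alphaOpt_some (a : K) : alphaOpt (some a) = alphaHom a := rfl

/-- The maps of the form `α₁∘β₁∘⋯∘α_k∘β_k∘λ`. -/
def IsWord (φ : MvPolynomial (Fin 2) K →ₐ[K] MvPolynomial (Fin 2) K) : Prop :=
  ∃ w t, φ = (reducedHom w).comp (lamOf t)

theorem IsWord.comp_lamOf {φ : MvPolynomial (Fin 2) K →ₐ[K] MvPolynomial (Fin 2) K}
    (hφ : IsWord φ) (t : Aff K) : IsWord (φ.comp (lamOf t)) := by
  obtain ⟨w, t', rfl⟩ := hφ
  obtain ⟨t'', h⟩ := exists_lamOf_comp_lamOf t' t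
  exact ⟨w, t'', by rw [AlgHom.comp_assoc, h]⟩

theorem isWord_reducedHom (w : Option (Option K × H K × List (K × H K))) :
    IsWord (reducedHom w) :=
  ⟨w, _, by rw [← id_eq_lamOf, AlgHom.comp_id]⟩

theorem exists_val_eq {h : Polynomial K} (hh : h ≠ 0) (h0 : h.coeff 0 = 0)
    (h1 : h.coeff 1 = 0) : ∃ k : H K, k.1 = h :=
  ⟨⟨h, hh, h0, h1⟩, rfl⟩

theorem isWord_reducedHom_comp_alphaHom_comp_betaHom
    (w : Option (Option K × H K × List (K × H K))) (a : K) {h : Polynomial K}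
    (h0 : h.coeff 0 = 0) (h1 : h.coeff 1 = 0) :
    IsWord ((reducedHom w).comp ((alphaHom a).comp (betaHom h))) := by
  by_cases hh : h = 0
  · rw [hh, betaHom_zero, AlgHom.comp_id, alphaHom_eq_lamOf]
    exact (isWord_reducedHom w).comp_lamOf _
  · obtain ⟨l, rfl⟩ := exists_val_eq hh h0 h1
    match w with
    | none =>
      rw [reducedHom_none, AlgHom.id_comp, ← alphaOpt_some, ← reducedHom_some_nil]
      exact isWord_reducedHom _
    | some (oa, k, rest) =>
      rw [← reducedHom_concat]
      exact isWord_reducedHom _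

theorem isWord_betaHom {h : Polynomial K} (h0 : h.coeff 0 = 0) (h1 : h.coeff 1 = 0) :
    IsWord (betaHom h) := by
  by_cases hh : h = 0
  · rw [hh, betaHom_zero]
    exact isWord_reducedHom none
  · obtain ⟨l, rfl⟩ := exists_val_eq hh h0 h1
    have := isWord_reducedHom (some (none, l, []))
    rwa [reducedHom_some_nil, alphaOpt_none, AlgHom.id_comp] at this

theorem isWord_reducedHom_comp_betaHom
    (w : Option (Option K × H K × List (K × H K))) {h : Polynomial K}
    (h0 : h.coeff 0 = 0) (h1 : h.coeff 1 = 0) :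
    IsWord ((reducedHom w).comp (betaHom h)) := by
  have hadd0 (k : H K) : (k.1 + h).coeff 0 = 0 := by
    rw [Polynomial.coeff_add, k.2.2.1, h0, add_zero]
  have hadd1 (k : H K) : (k.1 + h).coeff 1 = 0 := by
    rw [Polynomial.coeff_add, k.2.2.2, h1, add_zero]
  match w with
  | none => exact isWord_betaHom h0 h1
  | some (oa, k, rest) =>
    rcases List.eq_nil_or_concat rest with rfl | ⟨r, ⟨a, l⟩, rfl⟩
    · rw [reducedHom_some_nil, AlgHom.comp_assoc, betaHom_comp_betaHom]
      match oa with
      | none =>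
        rw [alphaOpt_none, AlgHom.id_comp]
        exact isWord_betaHom (hadd0 k) (hadd1 k)
      | some a =>
        have := isWord_reducedHom_comp_alphaHom_comp_betaHom none a (hadd0 k) (hadd1 k)
        rwa [reducedHom_none, AlgHom.id_comp] at this
    · rw [List.concat_eq_append, reducedHom_concat, AlgHom.comp_assoc, AlgHom.comp_assoc,
        betaHom_comp_betaHom]
      exact isWord_reducedHom_comp_alphaHom_comp_betaHom _ a (hadd0 l) (hadd1 l)

theorem exists_lower_order_split (h : Polynomial K) :
    ∃ (p₀ p₁ : K) (k : Polynomial K), k.coeff 0 = 0 ∧ k.coeff 1 = 0 ∧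
      h = Polynomial.C p₀ + Polynomial.C p₁ * Polynomial.X + k := by
  refine ⟨h.coeff 0, h.coeff 1,
    h - (Polynomial.C (h.coeff 0) + Polynomial.C (h.coeff 1) * Polynomial.X), ?_, ?_, by ring⟩
  · simp
  · simp [Polynomial.coeff_C]

/-- Upper triangular affine maps normalise the shears modulo affine maps. -/
theorem exists_lamOf_comp_betaHom {a₁ b₁ c₁ b₂ c₂ : K} (ht : a₁ * b₂ ≠ 0 * b₁)
    (h : Polynomial K) :
    ∃ (k : Polynomial K) (t' : Aff K), k.coeff 0 = 0 ∧ k.coeff 1 = 0 ∧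
      (lamOf (mkAff a₁ b₁ c₁ 0 b₂ c₂ ht)).comp (betaHom h) = (betaHom k).comp (lamOf t') := by
  obtain ⟨p₀, p₁, k, hk0, hk1, hk⟩ := exists_lower_order_split
    (h.comp (Polynomial.C b₂ * Polynomial.X + Polynomial.C c₂))
  have ha : a₁ ≠ 0 := by
    rintro rfl
    simp at ht
  refine ⟨Polynomial.C a₁⁻¹ * k, mkAff a₁ (b₁ + p₁) (c₁ + p₀) 0 b₂ c₂ ?_, ?_, ?_, ?_⟩
  · simpa using ht
  · rw [Polynomial.coeff_C_mul, hk0, mul_zero]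
  · rw [Polynomial.coeff_C_mul, hk1, mul_zero]
  · refine algHom_ext_fin_two ?_ ?_
    · have h1 := congrArg (Polynomial.aeval (X 1 : MvPolynomial (Fin 2) K)) hk
      rw [Polynomial.aeval_comp] at h1
      simp only [map_add, map_mul, Polynomial.aeval_X, Polynomial.aeval_C, algebraMap_eq] at h1
      have h2 : C a₁ * C a₁⁻¹ = (1 : MvPolynomial (Fin 2) K) := by
        rw [← C_mul, mul_inv_cancel₀ ha, C_1]
      simp only [AlgHom.comp_apply, betaHom_X0, betaHom_X1, lamOf_mkAff_X0, lamOf_mkAff_X1,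
        map_add, map_mul, algHom_aeval, algHom_C, algebraMap_eq, Polynomial.aeval_C, map_zero,
        zero_mul, zero_add, h1]
      linear_combination (-Polynomial.aeval (X 1) k) * h2
    · simp only [AlgHom.comp_apply, betaHom_X1, lamOf_mkAff_X1,
        map_add, map_mul, algHom_C, algebraMap_eq, map_zero, zero_mul, zero_add]

theorem exists_lamOf_eq_alphaHom_comp {a₁ b₁ c₁ a₂ b₂ c₂ : K} (ht : a₁ * b₂ ≠ a₂ * b₁)
    (ha : a₂ ≠ 0) :
    ∃ (a a' b' : K) (h : a' * a₂ ≠ 0 * b'), lamOf (mkAff a₁ b₁ c₁ a₂ b₂ c₂ ht) =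
      (alphaHom a).comp (lamOf (mkAff a' b' c₁ 0 a₂ c₂ h)) := by
  refine ⟨b₂ / a₂, b₁ - a₁ * (b₂ / a₂), a₁, ?_, ?_⟩
  · refine fun h => ht ?_
    field_simp at h
    linear_combination -h
  · have h1 : C a₂ * C (b₂ / a₂) = (C b₂ : MvPolynomial (Fin 2) K) := by
      rw [← C_mul, mul_div_cancel₀ _ ha]
    refine algHom_ext_fin_two ?_ ?_
    · simp only [AlgHom.comp_apply, alphaHom_X0, alphaHom_X1, lamOf_mkAff_X0, map_add, map_mul,
        algHom_C, algebraMap_eq, map_sub]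
      ring
    · simp only [AlgHom.comp_apply, alphaHom_X0, alphaHom_X1, lamOf_mkAff_X1, map_add, map_mul,
        algHom_C, algebraMap_eq, map_zero]
      linear_combination (-X 1) * h1

theorem IsWord.comp_betaHom {φ : MvPolynomial (Fin 2) K →ₐ[K] MvPolynomial (Fin 2) K}
    (hφ : IsWord φ) (h : Polynomial K) : IsWord (φ.comp (betaHom h)) := by
  obtain ⟨w, t, rfl⟩ := hφ
  obtain ⟨a₁, b₁, c₁, a₂, b₂, c₂, ht, rfl⟩ := exists_eq_mkAff t
  by_cases ha : a₂ = 0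
  · subst ha
    obtain ⟨k, t', hk0, hk1, hk⟩ := exists_lamOf_comp_betaHom (c₁ := c₁) (c₂ := c₂) ht h
    rw [AlgHom.comp_assoc, hk, ← AlgHom.comp_assoc]
    exact (isWord_reducedHom_comp_betaHom w hk0 hk1).comp_lamOf t'
  · obtain ⟨a, a', b', h', e⟩ := exists_lamOf_eq_alphaHom_comp (c₁ := c₁) (c₂ := c₂) ht ha
    obtain ⟨k, t', hk0, hk1, hk⟩ := exists_lamOf_comp_betaHom (c₁ := c₁) (c₂ := c₂) h' h
    rw [AlgHom.comp_assoc, e, AlgHom.comp_assoc, hk, ← AlgHom.comp_assoc (alphaHom a),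
      ← AlgHom.comp_assoc]
    exact (isWord_reducedHom_comp_alphaHom_comp_betaHom w a hk0 hk1).comp_lamOf t'

theorem exists_wordHom_eq (φ : MvPolynomial (Fin 2) K ≃ₐ[K] MvPolynomial (Fin 2) K) :
    ∃ d : DecompData K, wordHom d = φ.toAlgHom := by
  obtain ⟨w, t, h⟩ := induction_on_aut (S := IsWord) (isWord_reducedHom none)
    (fun φ t hφ => hφ.comp_lamOf t) (fun φ h hφ => hφ.comp_betaHom h) φ
  exact ⟨(w, t), (wordHom_mk w t).trans h.symm⟩

theorem two_le_natDegree (h : H K) : 2 ≤ h.1.natDegree := by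
  by_contra! hlt
  apply h.2.1
  rw [Polynomial.eq_X_add_C_of_natDegree_le_one (p := h.1) (by omega), h.2.2.1, h.2.2.2]
  simp

theorem totalDegree_C_mul_le {σ : Type*} (c : K) (p : MvPolynomial σ K) :
    (C c * p).totalDegree ≤ p.totalDegree := by
  rw [← smul_eq_C_mul]
  exact totalDegree_smul_le c p

theorem totalDegree_C_mul {σ : Type*} {c : K} (hc : c ≠ 0) (p : MvPolynomial σ K) :
    (C c * p).totalDegree = p.totalDegree := by
  refine le_antisymm (totalDegree_C_mul_le c p) ?_
  have h := totalDegree_C_mul_le c⁻¹ (C c * p)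
  rwa [← mul_assoc, ← C_mul, inv_mul_cancel₀ hc, C_1, one_mul] at h

theorem totalDegree_C_mul_add {σ : Type*} {p q : MvPolynomial σ K} {c : K} (hc : c ≠ 0)
    (h : q.totalDegree < p.totalDegree) : (C c * p + q).totalDegree = p.totalDegree := by
  rw [totalDegree_add_eq_left_of_totalDegree_lt, totalDegree_C_mul hc]
  rwa [totalDegree_C_mul hc]

theorem totalDegree_affine_le {σ : Type*} {p q : MvPolynomial σ K} (a b c : K)
    (h : q.totalDegree ≤ p.totalDegree) :
    (C a * p + C b * q + C c).totalDegree ≤ p.totalDegree := by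
  refine (totalDegree_add _ _).trans (max_le ((totalDegree_add _ _).trans (max_le ?_ ?_)) ?_)
  · exact totalDegree_C_mul_le a p
  · exact (totalDegree_C_mul_le b q).trans h
  · rw [totalDegree_C]
    exact Nat.zero_le _

theorem totalDegree_affine {σ : Type*} {p q : MvPolynomial σ K} {a : K} (b c : K) (ha : a ≠ 0)
    (h : q.totalDegree < p.totalDegree) :
    (C a * p + C b * q + C c).totalDegree = p.totalDegree := by
  rw [add_assoc]
  refine totalDegree_C_mul_add ha (lt_of_le_of_lt (totalDegree_add _ _) (max_lt ?_ ?_))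
  · exact (totalDegree_C_mul_le b q).trans_lt h
  · rw [totalDegree_C]
    omega

theorem totalDegree_add_aeval {σ : Type*} {u v : MvPolynomial σ K} (h : H K)
    (hu : 1 ≤ u.totalDegree) (hv : v.totalDegree ≤ u.totalDegree) :
    (v + Polynomial.aeval u h.1).totalDegree = h.1.natDegree * u.totalDegree ∧
      u.totalDegree < (v + Polynomial.aeval u h.1).totalDegree := by
  have h1 := Nat.mul_le_mul_right u.totalDegree (two_le_natDegree h)
  have h2 : (v + Polynomial.aeval u h.1).totalDegree = h.1.natDegree * u.totalDegree := by
    rw [totalDegree_add_eq_right_of_totalDegree_lt, totalDegree_polynomial_aeval]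
    rw [totalDegree_polynomial_aeval]
    omega
  exact ⟨h2, by omega⟩

theorem constantCoeff_aeval {σ : Type*} {u : MvPolynomial σ K} (h : H K)
    (hu : constantCoeff u = 0) : constantCoeff (Polynomial.aeval u h.1) = 0 := by
  rw [Polynomial.aeval_def, Polynomial.hom_eval₂, hu, Polynomial.eval₂_at_zero, h.2.2.1, map_zero]

theorem one_le_totalDegree {σ : Type*} {p : MvPolynomial σ K}
    (f : MvPolynomial σ K →ₐ[K] Polynomial K) (h : (f p).natDegree ≠ 0) :
    1 ≤ p.totalDegree := by
  by_contra! hlt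
  rw [totalDegree_eq_zero_iff_eq_C.1 (Nat.lt_one_iff.1 hlt), algHom_C] at h
  exact h (Polynomial.natDegree_C _)

/-- Restriction to the first coordinate axis. -/
noncomputable def axis₀ : MvPolynomial (Fin 2) K →ₐ[K] Polynomial K :=
  aeval ![Polynomial.X, 0]

/-- Restriction to the second coordinate axis. -/
noncomputable def axis₁ : MvPolynomial (Fin 2) K →ₐ[K] Polynomial K :=
  aeval ![0, Polynomial.X]

@[simp] theorem axis₀_X0 : axis₀ (X 0 : MvPolynomial (Fin 2) K) = Polynomial.X := by
  simp [axis₀]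

@[simp] theorem axis₀_X1 : axis₀ (X 1 : MvPolynomial (Fin 2) K) = 0 := by simp [axis₀]

@[simp] theorem axis₁_X0 : axis₁ (X 0 : MvPolynomial (Fin 2) K) = 0 := by simp [axis₁]

@[simp] theorem axis₁_X1 : axis₁ (X 1 : MvPolynomial (Fin 2) K) = Polynomial.X := by
  simp [axis₁]

@[simp] theorem axis₀_C (a : K) : axis₀ (C a) = Polynomial.C a := algHom_C _ a

@[simp] theorem axis₁_C (a : K) : axis₁ (C a) = Polynomial.C a := algHom_C _ a

theorem totalDegree_linear {a b c : K} (h : a ≠ 0 ∨ b ≠ 0) :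
    (C a * X 0 + C b * X 1 + C c : MvPolynomial (Fin 2) K).totalDegree = 1 := by
  refine le_antisymm ?_ ?_
  · exact (totalDegree_affine_le a b c (by simp)).trans (by simp)
  · rcases h with h | h
    · refine one_le_totalDegree axis₀ ?_
      simp [Polynomial.natDegree_linear h]
    · refine one_le_totalDegree axis₁ ?_
      simp [Polynomial.natDegree_linear h]

theorem totalDegree_alphaOpt_X0 (oa : Option K) : (alphaOpt oa (X 0)).totalDegree = 1 := by
  match oa with
  | none => exact totalDegree_X 0
  | some a =>
    change (alphaHom a (X 0)).totalDegree = 1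
    rw [alphaHom_X0, totalDegree_X]

theorem totalDegree_alphaOpt_X1 (oa : Option K) : (alphaOpt oa (X 1)).totalDegree = 1 := by
  match oa with
  | none => exact totalDegree_X 1
  | some a =>
    change (alphaHom a (X 1)).totalDegree = 1
    rw [alphaHom_X1]
    simpa using totalDegree_linear (a := (1 : K)) (b := a) (c := 0) (.inl one_ne_zero)

theorem constantCoeff_alphaOpt_X0 (oa : Option K) : constantCoeff (alphaOpt oa (X 0)) = 0 := by
  match oa with
  | none => exact constantCoeff_X _ _
  | some a =>
    change constantCoeff (alphaHom a (X 0)) = 0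
    rw [alphaHom_X0, constantCoeff_X]

theorem constantCoeff_alphaOpt_X1 (oa : Option K) : constantCoeff (alphaOpt oa (X 1)) = 0 := by
  match oa with
  | none => exact constantCoeff_X _ _
  | some a =>
    change constantCoeff (alphaHom a (X 1)) = 0
    simp [alphaHom_X1]

theorem exists_comp_alphaOpt_eq_id (oa : Option K) :
    ∃ f, AlgHom.comp f (alphaOpt oa) = AlgHom.id K _ := by
  match oa with
  | none => exact ⟨AlgHom.id K _, rfl⟩
  | some a =>
    refine ⟨lamOf (mkAff (-a) 1 0 1 0 0 (by simp)), ?_⟩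
    change AlgHom.comp _ (alphaHom a) = _
    refine algHom_ext_fin_two ?_ ?_
    · simp [alphaHom_X0, lamOf_mkAff_X1]
    · simp [alphaHom_X1, lamOf_mkAff_X0, lamOf_mkAff_X1]

theorem reducedHom_nil_X0 (oa : Option K) (h : H K) :
    reducedHom (some (oa, h, [])) (X 0) =
      alphaOpt oa (X 0) + Polynomial.aeval (alphaOpt oa (X 1)) h.1 := by
  change alphaOpt oa (betaHom h.1 (X 0)) = _
  rw [betaHom_X0, map_add, algHom_aeval]

theorem reducedHom_nil_X1 (oa : Option K) (h : H K) :
    reducedHom (some (oa, h, [])) (X 1) = alphaOpt oa (X 1) := by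
  change alphaOpt oa (betaHom h.1 (X 1)) = _
  rw [betaHom_X1]

theorem reducedHom_concat_X0 (oa : Option K) (h : H K) (rest : List (K × H K)) (a : K) (k : H K) :
    reducedHom (some (oa, h, rest ++ [(a, k)])) (X 0) =
      reducedHom (some (oa, h, rest)) (X 1) + Polynomial.aeval (reducedHom (some (oa, h, rest)) (X 0)
        + C a * reducedHom (some (oa, h, rest)) (X 1)) k.1 := by
  rw [reducedHom_concat, AlgHom.comp_apply, AlgHom.comp_apply, betaHom_X0, map_add, map_add,
    algHom_aeval, algHom_aeval, alphaHom_X0, alphaHom_X1, map_add, map_mul, algHom_C,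
    algebraMap_eq]

theorem reducedHom_concat_X1 (oa : Option K) (h : H K) (rest : List (K × H K)) (a : K) (k : H K) :
    reducedHom (some (oa, h, rest ++ [(a, k)])) (X 1) =
      reducedHom (some (oa, h, rest)) (X 0) + C a * reducedHom (some (oa, h, rest)) (X 1) := by
  rw [reducedHom_concat, AlgHom.comp_apply, AlgHom.comp_apply, betaHom_X1, alphaHom_X1, map_add,
    map_mul, algHom_C, algebraMap_eq]

theorem constantCoeff_reducedHom (oa : Option K) (h : H K) (rest : List (K × H K)) :
    constantCoeff (reducedHom (some (oa, h, rest)) (X 0)) = 0 ∧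
      constantCoeff (reducedHom (some (oa, h, rest)) (X 1)) = 0 := by
  induction rest using List.reverseRecOn with
  | nil =>
    rw [reducedHom_nil_X0, reducedHom_nil_X1, map_add,
      constantCoeff_aeval h (constantCoeff_alphaOpt_X1 oa), constantCoeff_alphaOpt_X0, add_zero]
    exact ⟨rfl, constantCoeff_alphaOpt_X1 oa⟩
  | append_singleton rest p ih =>
    obtain ⟨a, k⟩ := p
    have h1 : constantCoeff (reducedHom (some (oa, h, rest)) (X 0)
        + C a * reducedHom (some (oa, h, rest)) (X 1)) = 0 := by
      rw [map_add, map_mul, ih.1, ih.2, mul_zero, add_zero]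
    rw [reducedHom_concat_X0, reducedHom_concat_X1, map_add, constantCoeff_aeval k h1, ih.2, add_zero]
    exact ⟨rfl, h1⟩

theorem totalDegree_reducedHom (oa : Option K) (h : H K) (rest : List (K × H K)) :
    (reducedHom (some (oa, h, rest)) (X 0)).totalDegree =
        h.1.natDegree * (rest.map fun p => p.2.1.natDegree).prod ∧
      1 ≤ (reducedHom (some (oa, h, rest)) (X 1)).totalDegree ∧
      (reducedHom (some (oa, h, rest)) (X 1)).totalDegree <
        (reducedHom (some (oa, h, rest)) (X 0)).totalDegree := by
  induction rest using List.reverseRecOn with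
  | nil =>
    have h1 := totalDegree_add_aeval h (totalDegree_alphaOpt_X1 oa).ge
      ((totalDegree_alphaOpt_X0 oa).trans (totalDegree_alphaOpt_X1 oa).symm).le
    rw [reducedHom_nil_X0, reducedHom_nil_X1]
    refine ⟨?_, (totalDegree_alphaOpt_X1 oa).ge, h1.2⟩
    rw [h1.1, totalDegree_alphaOpt_X1, List.map_nil, List.prod_nil]
  | append_singleton rest p ih =>
    obtain ⟨a, k⟩ := p
    have h1 := totalDegree_affine a 0 one_ne_zero ih.2.2
    rw [C_0, C_1, one_mul, add_zero] at h1
    have h2 := totalDegree_add_aeval k (h1.trans_ge (ih.2.1.trans ih.2.2.le))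
      (ih.2.2.trans_eq h1.symm).le
    rw [reducedHom_concat_X0, reducedHom_concat_X1]
    refine ⟨?_, h1.trans_ge (ih.2.1.trans ih.2.2.le), h2.2⟩
    rw [h2.1, h1, ih.1, List.map_append, List.prod_append, List.map_singleton, List.prod_singleton]
    ring

theorem two_le_totalDegree_reducedHom (oa : Option K) (h : H K) (rest : List (K × H K)) :
    2 ≤ (reducedHom (some (oa, h, rest)) (X 0)).totalDegree := by
  have := totalDegree_reducedHom oa h rest
  omega

theorem comp_lamOf_mkAff_X0 {a₁ b₁ c₁ a₂ b₂ c₂ : K} (ht : a₁ * b₂ ≠ a₂ * b₁)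
    (f : MvPolynomial (Fin 2) K →ₐ[K] MvPolynomial (Fin 2) K) :
    f.comp (lamOf (mkAff a₁ b₁ c₁ a₂ b₂ c₂ ht)) (X 0) =
      C a₁ * f (X 0) + C b₁ * f (X 1) + C c₁ := by
  rw [AlgHom.comp_apply, lamOf_mkAff_X0]
  simp only [map_add, map_mul, algHom_C, algebraMap_eq]

theorem comp_lamOf_mkAff_X1 {a₁ b₁ c₁ a₂ b₂ c₂ : K} (ht : a₁ * b₂ ≠ a₂ * b₁)
    (f : MvPolynomial (Fin 2) K →ₐ[K] MvPolynomial (Fin 2) K) :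
    f.comp (lamOf (mkAff a₁ b₁ c₁ a₂ b₂ c₂ ht)) (X 1) =
      C a₂ * f (X 0) + C b₂ * f (X 1) + C c₂ := by
  rw [AlgHom.comp_apply, lamOf_mkAff_X1]
  simp only [map_add, map_mul, algHom_C, algebraMap_eq]

theorem max_totalDegree_wordHom (d : DecompData K) :
    max (wordHom d (X 0)).totalDegree (wordHom d (X 1)).totalDegree = degProd d := by
  obtain ⟨w, t⟩ := d
  obtain ⟨a₁, b₁, c₁, a₂, b₂, c₂, ht, rfl⟩ := exists_eq_mkAff t
  rw [wordHom_mk, comp_lamOf_mkAff_X0, comp_lamOf_mkAff_X1]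
  match w with
  | none =>
    change max (C a₁ * X 0 + C b₁ * X 1 + C c₁ : MvPolynomial (Fin 2) K).totalDegree
      (C a₂ * X 0 + C b₂ * X 1 + C c₂ : MvPolynomial (Fin 2) K).totalDegree = 1
    rw [totalDegree_linear, totalDegree_linear, max_self]
    · by_contra! h
      simp [h.1, h.2] at ht
    · by_contra! h
      simp [h.1, h.2] at ht
  | some (oa, h, rest) =>
    obtain ⟨h1, -, h2⟩ := totalDegree_reducedHom oa h rest
    refine Eq.trans (le_antisymm (max_le (totalDegree_affine_le a₁ b₁ c₁ h2.le)
      (totalDegree_affine_le a₂ b₂ c₂ h2.le)) ?_) h1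
    rcases eq_or_ne a₁ 0 with ha | ha
    · refine le_max_of_le_right (totalDegree_affine b₂ c₂ ?_ h2).ge
      rintro rfl
      simp [ha] at ht
    · exact le_max_of_le_left (totalDegree_affine b₁ c₁ ha h2).ge

theorem H_ext {h k : H K} (e : h.1 = k.1) : h = k := Subtype.ext e

theorem aeval_scale {σ : Type*} (s : K) (u : MvPolynomial σ K) (h : Polynomial K) :
    Polynomial.aeval (C s * u) h = Polynomial.aeval u (h.comp (Polynomial.C s * Polynomial.X)) := by
  rw [Polynomial.aeval_comp, map_mul, Polynomial.aeval_C, Polynomial.aeval_X, algebraMap_eq]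

/-- Comparison of two shears over the same element `u`, modulo terms of lower degree. -/
theorem shear_rigidity {σ : Type*} {u v v' : MvPolynomial σ K} {c d s : K} {h h' : H K}
    (hv : v.totalDegree < u.totalDegree)
    (hv' : v'.totalDegree < u.totalDegree)
    (e : v' + Polynomial.aeval (C s * u) h'.1 = C c * (v + Polynomial.aeval u h.1) + C d * u) :
    d = 0 ∧ v' = C c * v ∧ h'.1.comp (Polynomial.C s * Polynomial.X) = Polynomial.C c * h.1 := by
  obtain ⟨g, hg⟩ : ∃ g, g = h'.1.comp (Polynomial.C s * Polynomial.X) - Polynomial.C c * h.1 -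
      Polynomial.C d * Polynomial.X := ⟨_, rfl⟩
  have h1 : Polynomial.aeval u g = C c * v - v' := by
    rw [aeval_scale] at e
    rw [hg]
    simp only [map_sub, map_mul, Polynomial.aeval_C, Polynomial.aeval_X, algebraMap_eq]
    linear_combination e
  have h2 : (Polynomial.aeval u g).totalDegree < u.totalDegree := by
    rw [h1]
    exact (totalDegree_sub _ _).trans_lt (max_lt ((totalDegree_C_mul_le c v).trans_lt hv) hv')
  rw [totalDegree_polynomial_aeval] at h2
  have h3 : g.natDegree = 0 := by
    by_contra h0
    have := Nat.mul_le_mul_right u.totalDegree (Nat.one_le_iff_ne_zero.2 h0)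
    omega
  have h4 : g.coeff 0 = 0 := by
    rw [hg]
    simp [Polynomial.coeff_zero_eq_eval_zero, Polynomial.eval_comp,
      ← Polynomial.coeff_zero_eq_eval_zero h.1, ← Polynomial.coeff_zero_eq_eval_zero h'.1,
      h.2.2.1, h'.2.2.1]
  have h5 : g = 0 := by rw [Polynomial.eq_C_of_natDegree_eq_zero h3, h4, Polynomial.C_0]
  have h6 : d = 0 := by
    have h7 := congrArg (fun p => Polynomial.coeff p 1) (hg.symm.trans h5)
    simpa [Polynomial.comp_C_mul_X_coeff, h.2.2.2, h'.2.2.2] using h7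
  refine ⟨h6, ?_, ?_⟩
  · rw [h5, map_zero] at h1
    exact (sub_eq_zero.1 h1.symm).symm
  · rw [h5, h6, Polynomial.C_0, zero_mul, sub_zero] at hg
    exact sub_eq_zero.1 hg.symm

theorem aeval_zero_H (h : H K) : Polynomial.aeval (0 : Polynomial K) h.1 = 0 := by
  rw [Polynomial.aeval_def, Polynomial.eval₂_at_zero, h.2.2.1, map_zero]

theorem base_rigidity {c d s : K} {h h' : H K}
    (e₀ : (X 0 + Polynomial.aeval (X 1) h'.1 : MvPolynomial (Fin 2) K) =
      C c * (X 0 + Polynomial.aeval (X 1) h.1) + C d * X 1)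
    (e₁ : (X 1 : MvPolynomial (Fin 2) K) = C s * X 1) : h = h' ∧ c = 1 ∧ d = 0 ∧ s = 1 := by
  have h1 := congrArg (fun p => (axis₁ p).coeff 1) e₁
  have h2 := congrArg (fun p => (axis₀ p).coeff 1) e₀
  have h3 := congrArg axis₁ e₀
  simp only [map_mul, axis₁_X1, axis₁_C, Polynomial.coeff_C_mul, Polynomial.coeff_X_one,
    mul_one] at h1
  simp only [map_add, map_mul, axis₀_X0, axis₀_X1, axis₀_C, algHom_aeval, aeval_zero_H,
    Polynomial.coeff_C_mul, Polynomial.coeff_X_one, mul_one, add_zero, mul_zero] at h2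
  simp only [map_add, map_mul, axis₁_X0, axis₁_X1, axis₁_C, algHom_aeval, zero_add, ← h2,
    Polynomial.aeval_X_left_apply, Polynomial.C_1, one_mul] at h3
  have h4 := congrArg (fun p => Polynomial.coeff p 1) h3
  simp only [Polynomial.coeff_add, Polynomial.coeff_C_mul, Polynomial.coeff_X_one, mul_one,
    h.2.2.2, h'.2.2.2, zero_add] at h4
  rw [← h4, Polynomial.C_0, zero_mul, add_zero] at h3
  exact ⟨H_ext h3.symm, h2.symm, h4.symm, h1.symm⟩

theorem alphaOpt_rigidity {oa oa' : Option K} {s : K} (hs : s ≠ 0)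
    (e : alphaOpt oa' (X 1) = C s * alphaOpt oa (X 1)) : oa = oa' := by
  match oa, oa' with
  | none, none => rfl
  | some a, none =>
    have h1 := congrArg (fun p => (axis₀ p).coeff 1) e
    rw [alphaOpt_none, alphaOpt_some, alphaHom_X1] at h1
    simp [hs.symm] at h1
  | none, some a =>
    have h1 := congrArg (fun p => (axis₀ p).coeff 1) e
    rw [alphaOpt_none, alphaOpt_some, alphaHom_X1] at h1
    simp at h1
  | some a, some a' =>
    have h1 := congrArg (fun p => (axis₀ p).coeff 1) e
    have h2 := congrArg (fun p => (axis₁ p).coeff 1) e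
    rw [alphaOpt_some, alphaOpt_some, alphaHom_X1, alphaHom_X1] at h1 h2
    simp at h1 h2
    rw [h2, ← h1, one_mul]

theorem reducedHom_nil_rigidity {oa oa' : Option K} {h h' : H K} {c d s : K} (hs : s ≠ 0)
    (e₀ : reducedHom (some (oa', h', [])) (X 0) =
      C c * reducedHom (some (oa, h, [])) (X 0) + C d * reducedHom (some (oa, h, [])) (X 1))
    (e₁ : reducedHom (some (oa', h', [])) (X 1) = C s * reducedHom (some (oa, h, [])) (X 1)) :
    oa = oa' ∧ h = h' ∧ c = 1 ∧ d = 0 ∧ s = 1 := by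
  have h1 : oa = oa' := by
    rw [reducedHom_nil_X1, reducedHom_nil_X1] at e₁
    exact alphaOpt_rigidity hs e₁
  subst h1
  obtain ⟨f, hf⟩ := exists_comp_alphaOpt_eq_id oa
  have hf' (p) : f (alphaOpt oa p) = p := DFunLike.congr_fun hf p
  have h2 := congrArg f e₀
  have h3 := congrArg f e₁
  simp only [reducedHom_nil_X0, reducedHom_nil_X1, map_add, map_mul, algHom_aeval, hf', algHom_C,
    algebraMap_eq] at h2 h3
  exact ⟨rfl, base_rigidity h2 h3⟩

theorem reducedHom_some_rigidity {oa oa' : Option K} {h h' : H K} (rest : List (K × H K)) :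
    ∀ (rest' : List (K × H K)) {c d s : K}, c ≠ 0 → s ≠ 0 →
    reducedHom (some (oa', h', rest')) (X 0) =
      C c * reducedHom (some (oa, h, rest)) (X 0) + C d * reducedHom (some (oa, h, rest)) (X 1) →
    reducedHom (some (oa', h', rest')) (X 1) = C s * reducedHom (some (oa, h, rest)) (X 1) →
    (oa = oa' ∧ h = h' ∧ rest = rest') ∧ c = 1 ∧ d = 0 ∧ s = 1 := by
  have hdeg (oa : Option K) (h : H K) (r : List (K × H K)) (a : K) (k : H K) :
      (reducedHom (some (oa, h, r ++ [(a, k)])) (X 1)).totalDegree =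
        (reducedHom (some (oa, h, r)) (X 0)).totalDegree := by
    have := totalDegree_affine a 0 one_ne_zero (totalDegree_reducedHom oa h r).2.2
    rwa [C_1, one_mul, C_0, add_zero, ← reducedHom_concat_X1 oa h r a k] at this
  have hdeg_nil (oa : Option K) (h : H K) :
      (reducedHom (some (oa, h, [])) (X 1)).totalDegree = 1 := by
    rw [reducedHom_nil_X1, totalDegree_alphaOpt_X1]
  induction rest using List.reverseRecOn with
  | nil =>
    intro rest' c d s hc hs e₀ e₁
    rcases List.eq_nil_or_concat rest' with rfl | ⟨r', ⟨a', k'⟩, rfl⟩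
    · obtain ⟨h1, h2, h3⟩ := reducedHom_nil_rigidity hs e₀ e₁
      exact ⟨⟨h1, h2, rfl⟩, h3⟩
    · have h1 := congrArg totalDegree e₁
      rw [List.concat_eq_append, hdeg, totalDegree_C_mul hs, hdeg_nil] at h1
      have := two_le_totalDegree_reducedHom oa' h' r'
      omega
  | append_singleton r p ih =>
    obtain ⟨a, k⟩ := p
    intro rest' c d s hc hs e₀ e₁
    rcases List.eq_nil_or_concat rest' with rfl | ⟨r', ⟨a', k'⟩, rfl⟩
    · have h1 := congrArg totalDegree e₁
      rw [totalDegree_C_mul hs, hdeg, hdeg_nil] at h1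
      have := two_le_totalDegree_reducedHom oa h r
      omega
    · rw [List.concat_eq_append] at e₀ e₁
      have h1 := congrArg totalDegree e₁
      rw [totalDegree_C_mul hs, hdeg] at h1
      have h2 := totalDegree_reducedHom oa h r
      have h3 := totalDegree_reducedHom oa' h' r'
      have h4 := hdeg oa h r a k
      rw [reducedHom_concat_X0, ← reducedHom_concat_X1, reducedHom_concat_X0,
        ← reducedHom_concat_X1, e₁] at e₀
      obtain ⟨h5, h6, h7⟩ := shear_rigidity (by omega) (by omega) e₀
      rw [reducedHom_concat_X1, reducedHom_concat_X1, h6] at e₁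
      obtain ⟨⟨i1, i2, i3⟩, i4, i5, i6⟩ := ih r' (c := s) (d := s * a - a' * c) (s := c) hs hc
        (by
          simp only [C_sub, C_mul]
          linear_combination e₁) h6
      rw [i4, i6, Polynomial.C_1, one_mul, one_mul, Polynomial.comp_X] at h7
      rw [i4, i6, one_mul, mul_one] at i5
      rw [H_ext h7, sub_eq_zero.1 i5, i3]
      exact ⟨⟨i1, i2, List.concat_eq_append.symm⟩, i6, h5, i4⟩

theorem reducedHom_rigidity {w w' : Option (Option K × H K × List (K × H K))} {c d e s : K}
    (hdet : c * s - d * e ≠ 0)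
    (e₀ : reducedHom w' (X 0) = C c * reducedHom w (X 0) + C d * reducedHom w (X 1))
    (e₁ : reducedHom w' (X 1) = C e * reducedHom w (X 0) + C s * reducedHom w (X 1)) :
    w = w' ∧ c = 1 ∧ d = 0 ∧ e = 0 ∧ s = 1 := by
  match w, w' with
  | none, none =>
    rw [reducedHom_none, AlgHom.id_apply, AlgHom.id_apply] at e₀ e₁
    have h1 := congrArg (fun p => (axis₀ p).coeff 1) e₀
    have h2 := congrArg (fun p => (axis₁ p).coeff 1) e₀
    have h3 := congrArg (fun p => (axis₀ p).coeff 1) e₁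
    have h4 := congrArg (fun p => (axis₁ p).coeff 1) e₁
    simp at h1 h2 h3 h4
    exact ⟨rfl, h1.symm, h2.symm, h3.symm, h4.symm⟩
  | none, some (oa', h', rest') =>
    have h1 := totalDegree_affine_le c d 0 (p := (X 0 : MvPolynomial (Fin 2) K)) (q := X 1)
      (by simp)
    rw [reducedHom_none, AlgHom.id_apply, AlgHom.id_apply] at e₀
    rw [C_0, add_zero, ← e₀, totalDegree_X] at h1
    have := two_le_totalDegree_reducedHom oa' h' rest'
    omega
  | some (oa, h, rest), none =>
    have h1 := totalDegree_reducedHom oa h rest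
    have h2 := two_le_totalDegree_reducedHom oa h rest
    rcases eq_or_ne c 0 with hc | hc
    · have he : e ≠ 0 := by
        rintro rfl
        simp [hc] at hdet
      have h3 := totalDegree_affine s 0 he h1.2.2
      rw [C_0, add_zero, ← e₁, reducedHom_none, AlgHom.id_apply, totalDegree_X] at h3
      omega
    · have h3 := totalDegree_affine d 0 hc h1.2.2
      rw [C_0, add_zero, ← e₀, reducedHom_none, AlgHom.id_apply, totalDegree_X] at h3
      omega
  | some (oa, h, rest), some (oa', h', rest') =>
    have h1 := (totalDegree_reducedHom oa h rest).2.2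
    have h2 := (totalDegree_reducedHom oa' h' rest').2.2
    have he : e = 0 := by
      by_contra he
      have h3 := totalDegree_affine s 0 he h1
      have h4 := totalDegree_affine_le c d 0 h1.le
      rw [C_0, add_zero, ← e₁] at h3
      rw [C_0, add_zero, ← e₀] at h4
      omega
    rw [he, mul_zero, sub_zero] at hdet
    rw [he, C_0, zero_mul, zero_add] at e₁
    obtain ⟨⟨rfl, rfl, rfl⟩, h3, h4, h5⟩ := reducedHom_some_rigidity rest rest'
      (left_ne_zero_of_mul hdet) (right_ne_zero_of_mul hdet) e₀ e₁
    exact ⟨rfl, h3, h4, he, h5⟩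

theorem constantCoeff_reducedHom_X (w : Option (Option K × H K × List (K × H K))) :
    constantCoeff (reducedHom w (X 0)) = 0 ∧ constantCoeff (reducedHom w (X 1)) = 0 := by
  match w with
  | none => exact ⟨constantCoeff_X _ _, constantCoeff_X _ _⟩
  | some (oa, h, rest) => exact constantCoeff_reducedHom oa h rest

theorem wordHom_injective : Function.Injective (wordHom (K := K)) := by
  rintro ⟨w, t⟩ ⟨w', t'⟩ hww
  obtain ⟨a₁, b₁, c₁, a₂, b₂, c₂, ht, rfl⟩ := exists_eq_mkAff t
  obtain ⟨a₁', b₁', c₁', a₂', b₂', c₂', ht', rfl⟩ := exists_eq_mkAff t'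
  rw [wordHom_mk, wordHom_mk] at hww
  have e₀ := DFunLike.congr_fun hww (X 0)
  have e₁ := DFunLike.congr_fun hww (X 1)
  rw [comp_lamOf_mkAff_X0, comp_lamOf_mkAff_X0] at e₀
  rw [comp_lamOf_mkAff_X1, comp_lamOf_mkAff_X1] at e₁
  obtain ⟨hc1, hc2⟩ := constantCoeff_reducedHom_X w
  obtain ⟨hc1', hc2'⟩ := constantCoeff_reducedHom_X w'
  have hc₁ : c₁ = c₁' := by simpa [hc1, hc2, hc1', hc2'] using congrArg constantCoeff e₀
  have hc₂ : c₂ = c₂' := by simpa [hc1, hc2, hc1', hc2'] using congrArg constantCoeff e₁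
  subst hc₁ hc₂
  obtain ⟨δ, hδ⟩ : ∃ δ, (a₁' * b₂' - a₂' * b₁') * δ = 1 :=
    ⟨_, mul_inv_cancel₀ (sub_ne_zero.2 ht')⟩
  have hCδ := congrArg (C : K →+* MvPolynomial (Fin 2) K) hδ
  simp only [C_mul, C_sub, C_1] at hCδ
  have hδ0 : δ ≠ 0 := right_ne_zero_of_mul (hδ.trans_ne one_ne_zero)
  have key := reducedHom_rigidity (w := w) (w' := w')
    (c := δ * (b₂' * a₁ - b₁' * a₂)) (d := δ * (b₂' * b₁ - b₁' * b₂))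
    (e := δ * (a₁' * a₂ - a₂' * a₁)) (s := δ * (a₁' * b₂ - a₂' * b₁)) ?_ ?_ ?_
  · obtain ⟨rfl, k1, k2, k3, k4⟩ := key
    have f1 : a₁ = a₁' := by linear_combination a₁' * k1 + b₁' * k3 - a₁ * hδ
    have f2 : b₁ = b₁' := by linear_combination a₁' * k2 + b₁' * k4 - b₁ * hδ
    have f3 : a₂ = a₂' := by linear_combination a₂' * k1 + b₂' * k3 - a₂ * hδ
    have f4 : b₂ = b₂' := by linear_combination a₂' * k2 + b₂' * k4 - b₂ * hδ
    subst f1 f2 f3 f4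
    rfl
  · have h1 := mul_ne_zero hδ0 (sub_ne_zero.2 ht)
    refine fun h2 => h1 ?_
    linear_combination h2 - δ * (a₁ * b₂ - a₂ * b₁) * hδ
  · simp only [C_mul, C_sub]
    linear_combination (-reducedHom w' (X 0)) * hCδ - C δ * C b₂' * e₀ + C δ * C b₁' * e₁
  · simp only [C_mul, C_sub]
    linear_combination (-reducedHom w' (X 1)) * hCδ + C δ * C a₂' * e₀ - C δ * C a₁' * e₁

end PlaneAut

/-- Every automorphism `φ` of `K[x,y]` can be written uniquely as
`α₁∘β₁∘α₂∘β₂∘⋯∘α_k∘β_k∘λ` with `α_i ∈ {ι} ∪ {(y, x+ay)}` (`α₂,…,α_k ≠ ι`),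
`β_i = (x + h_i(y), y)` with `0 ≠ h_i ∈ y²K[y]`, and `λ` affine; moreover
`deg φ = deg(h₁)⋯deg(h_k)`. -/
theorem stmt_8 (K : Type*) [Field K]
    (φ : MvPolynomial (Fin 2) K ≃ₐ[K] MvPolynomial (Fin 2) K) :
    (∃! d : DecompData K, wordHom d = φ.toAlgHom) ∧
    (∀ d : DecompData K, wordHom d = φ.toAlgHom →
      max (φ (X 0)).totalDegree (φ (X 1)).totalDegree = degProd d) := by
  refine ⟨?_, fun d hd => ?_⟩
  · obtain ⟨d, hd⟩ := PlaneAut.exists_wordHom_eq φ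
    exact ⟨d, hd, fun d' hd' => PlaneAut.wordHom_injective (hd'.trans hd.symm)⟩
  · rw [← PlaneAut.max_totalDegree_wordHom, hd]
    rfl
end

section
/- For any field K, the elements (y, x + a y) for a ∈ K, together with the identity, form a complete set of left coset representatives of the affine group A of Aut(K[x,y]) modulo C = A ∩ B, where B is the group of triangular automorphisms; i.e., every affine automorphism λ is either in C or can be written uniquely as (y, x + ay)∘γ with a ∈ K, γ ∈ C. -/
open MvPolynomial

/-- The endomorphism of `K[x,y]` corresponding to the affine pair
`(a₁x + b₁y + c₁, a₂x + b₂y + c₂)`. -/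
noncomputable def lamHom {K : Type*} [CommRing K] (a₁ b₁ c₁ a₂ b₂ c₂ : K) :
    MvPolynomial (Fin 2) K →ₐ[K] MvPolynomial (Fin 2) K :=
  aeval ![C a₁ * X 0 + C b₁ * X 1 + C c₁, C a₂ * X 0 + C b₂ * X 1 + C c₂]

/-- The endomorphism of `K[x,y]` corresponding to the triangular pair
`(ax + h(y), by + b₁)`. -/
noncomputable def triHom {K : Type*} [CommRing K] (a : K) (h : Polynomial K) (b b₁ : K) :
    MvPolynomial (Fin 2) K →ₐ[K] MvPolynomial (Fin 2) K :=
  aeval ![C a * X 0 + Polynomial.aeval (X 1 : MvPolynomial (Fin 2) K) h, C b * X 1 + C b₁]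

/-- `φ` is an affine automorphism of `K[x,y]`. -/
def IsAffine {K : Type*} [CommRing K]
    (φ : MvPolynomial (Fin 2) K ≃ₐ[K] MvPolynomial (Fin 2) K) : Prop :=
  ∃ a₁ b₁ c₁ a₂ b₂ c₂ : K, a₁ * b₂ ≠ a₂ * b₁ ∧ φ.toAlgHom = lamHom a₁ b₁ c₁ a₂ b₂ c₂

/-- `φ` is a triangular automorphism of `K[x,y]`. -/
def IsTriangular {K : Type*} [CommRing K]
    (φ : MvPolynomial (Fin 2) K ≃ₐ[K] MvPolynomial (Fin 2) K) : Prop :=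
  ∃ (a b b₁ : K) (h : Polynomial K), a ≠ 0 ∧ b ≠ 0 ∧ φ.toAlgHom = triHom a h b b₁

/-- The automorphism `(y, x + a y)` of `K[x,y]`, with inverse `(y - a x, x)`. -/
noncomputable def alphaEquiv {K : Type*} [CommRing K] (a : K) :
    MvPolynomial (Fin 2) K ≃ₐ[K] MvPolynomial (Fin 2) K :=
  AlgEquiv.ofAlgHom (alphaHom a) (aeval ![X 1 - C a * X 0, X 0])
    (by ext1 i; fin_cases i <;> simp [alphaHom])
    (by ext1 i; fin_cases i <;> simp [alphaHom])

lemma alphaEquiv_apply {K : Type*} [CommRing K] (a : K) (p : MvPolynomial (Fin 2) K) :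
    alphaEquiv a p = alphaHom a p := rfl

lemma alphaHom_injective {K : Type*} [CommRing K] (a : K) :
    Function.Injective (alphaHom a) := fun p q h =>
  (alphaEquiv a).injective (by simpa only [alphaEquiv_apply] using h)

lemma alphaHom_comp_trans_alphaEquiv_symm {K : Type*} [CommRing K] (a : K)
    (φ : MvPolynomial (Fin 2) K ≃ₐ[K] MvPolynomial (Fin 2) K) :
    (alphaHom a).comp (φ.trans (alphaEquiv a).symm).toAlgHom = φ.toAlgHom := by
  apply AlgHom.ext
  intro p
  change alphaHom a ((alphaEquiv a).symm (φ p)) = φ p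
  rw [← alphaEquiv_apply, AlgEquiv.apply_symm_apply]

lemma alphaHom_comp_lamHom {K : Type*} [CommRing K] (a a₁ b₁ c₁ a₂ b₂ c₂ : K) :
    (alphaHom a).comp (lamHom a₁ b₁ c₁ a₂ b₂ c₂) =
      lamHom b₁ (a₁ + b₁ * a) c₁ b₂ (a₂ + b₂ * a) c₂ := by
  ext1 i
  fin_cases i <;> simp [alphaHom, lamHom] <;> ring

lemma lamHom_eq_triHom {K : Type*} [CommRing K] (a₁ b₁ c₁ b₂ c₂ : K) :
    lamHom a₁ b₁ c₁ 0 b₂ c₂ = triHom a₁ (.C b₁ * .X + .C c₁) b₂ c₂ := by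
  ext1 i
  fin_cases i <;> simp [lamHom, triHom, add_assoc]

lemma linear_coeff_eq {K : Type*} [CommRing K] {a b c a' b' c' : K}
    (h : (C a * X 0 + C b * X 1 + C c : MvPolynomial (Fin 2) K) =
      C a' * X 0 + C b' * X 1 + C c') : a = a' ∧ b = b' := by
  have h₀ := congrArg (eval ![0, 0]) h
  have h₁ := congrArg (eval ![1, 0]) h
  have h₂ := congrArg (eval ![0, 1]) h
  simp only [map_add, map_mul, eval_C, eval_X, Matrix.cons_val_zero, Matrix.cons_val_one, mul_zero,
    mul_one, zero_add, add_zero] at h₀ h₁ h₂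
  subst h₀
  exact ⟨add_right_cancel h₁, add_right_cancel h₂⟩

/-- The parameter `a` in a decomposition `(y, x + ay) ∘ γ` of an affine map, with `γ`
triangular, is determined by the second component. -/
lemma mul_eq_of_lamHom_eq_comp_triHom {K : Type*} [CommRing K]
    {a₁ b₁ c₁ a₂ b₂ c₂ a d b e : K} {h : Polynomial K}
    (H : lamHom a₁ b₁ c₁ a₂ b₂ c₂ = (alphaHom a).comp (triHom d h b e)) :
    a₂ * a = b₂ := by
  have H1 := DFunLike.congr_fun H (X 1)
  have H2 : (C a₂ * X 0 + C b₂ * X 1 + C c₂ : MvPolynomial (Fin 2) K) =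
      C b * X 0 + C (b * a) * X 1 + C e := by
    simp [lamHom, alphaHom, triHom] at H1
    rw [H1, C_mul]
    ring
  obtain ⟨rfl, rfl⟩ := linear_coeff_eq H2
  rfl

/-- The identity together with the automorphisms `(y, x + ay)`, `a ∈ K`, form a complete
set of left coset representatives of the affine group `A` modulo `C = A ∩ B`:
every affine automorphism `λ` either lies in `C` (i.e. is also triangular) or can be
written uniquely as `(y, x + ay) ∘ γ` with `a ∈ K` and `γ ∈ C`. -/
theorem stmt_10 (K : Type*) [Field K]
    (φ : MvPolynomial (Fin 2) K ≃ₐ[K] MvPolynomial (Fin 2) K) (hφ : IsAffine φ) :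
    IsTriangular φ ∨
      ∃! p : K × {γ : MvPolynomial (Fin 2) K ≃ₐ[K] MvPolynomial (Fin 2) K //
            IsAffine γ ∧ IsTriangular γ},
        φ.toAlgHom = (alphaHom p.1).comp p.2.1.toAlgHom := by
  obtain ⟨a₁, b₁, c₁, a₂, b₂, c₂, hdet, hφ⟩ := hφ
  by_cases ha : a₂ = 0
  · subst ha
    rw [zero_mul] at hdet
    exact .inl ⟨a₁, b₂, c₂, _, left_ne_zero_of_mul hdet, right_ne_zero_of_mul hdet,
      hφ.trans (lamHom_eq_triHom ..)⟩
  right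
  have hd : b₁ - a₁ * (b₂ / a₂) ≠ 0 := by
    intro h
    apply hdet
    field_simp at h
    linear_combination -h
  have hγ : (φ.trans (alphaEquiv (b₂ / a₂)).symm).toAlgHom =
      lamHom (b₁ - a₁ * (b₂ / a₂)) a₁ c₁ 0 a₂ c₂ := by
    apply (AlgHom.cancel_left (alphaHom_injective _)).mp
    rw [alphaHom_comp_trans_alphaEquiv_symm, hφ, alphaHom_comp_lamHom, sub_add_cancel,
      zero_add, mul_div_cancel₀ _ ha]
  refine ⟨(b₂ / a₂, ⟨φ.trans (alphaEquiv (b₂ / a₂)).symm,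
    ⟨_, _, _, _, _, _, by simpa using ⟨hd, ha⟩, hγ⟩,
    ⟨_, _, _, _, hd, ha, hγ.trans (lamHom_eq_triHom ..)⟩⟩),
    (alphaHom_comp_trans_alphaEquiv_symm _ _).symm, ?_⟩
  rintro ⟨a, γ, hγA, d, b, e, h, hd', hb, hγB⟩ H
  dsimp only at H
  obtain rfl : a = b₂ / a₂ := by
    rw [hφ, hγB] at H
    rw [eq_div_iff ha, mul_comm]
    exact mul_eq_of_lamHom_eq_comp_triHom H
  refine Prod.ext rfl (Subtype.ext (AlgEquiv.ext fun p => alphaHom_injective (b₂ / a₂) ?_))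
  have h := (alphaHom_comp_trans_alphaEquiv_symm (b₂ / a₂) φ).trans H
  exact (AlgHom.congr_fun h p).symm
end
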